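/- arXiv:0712.1785 — 2 statements merged into one kernel-verified Lean document; each statement's English description precedes it below -/
import Mathlib

section
/- Let k be a number field, let k_v be the completion of k at a nonarchimedean place v, and let m ∈ ℤ_{>0}. Then the set k_v^{×m} ∩ k (the nonzero elements of k that are m-th powers in k_v) is diophantine over k. -/
/-- A subset `A ⊆ k^n` is diophantine over `k` if there exist `m ∈ ℕ` and finitely many
polynomials `f₁, …, f_r ∈ k[x₁, …, x_{n+m}]` such that
`A = {a ∈ k^n : ∃ b ∈ k^m, f_i(a,b) = 0 for all i}`. -/
def IsDiophantine (k : Type*) [Field k] {n : ℕ} (A : Set (Fin n → k)) : Prop :=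
  ∃ (m r : ℕ) (f : Fin r → MvPolynomial (Fin (n + m)) k),
    A = {a : Fin n → k | ∃ b : Fin m → k,
      ∀ i : Fin r, MvPolynomial.eval (Fin.append a b) (f i) = 0}

/-- A subset of `k` is diophantine if the corresponding subset of `k¹` is. -/
def IsDiophantineSet (k : Type*) [Field k] (A : Set k) : Prop :=
  IsDiophantine k {x : Fin 1 → k | x 0 ∈ A}

open IsDedekindDomain

/-!
Choose `δ` such that `x ^ 2 + x - δ` has no root modulo `v`, put `Δ = 1 + 4 * δ`, and let `π` be a
uniformizer at `v`. The form `a ^ 2 - Δ * b ^ 2 + π * c ^ 2 - π * Δ * d ^ 2` is anisotropic at `v`,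
so the first coordinates of its representations of `n` are bounded at `v` by `√n`, up to a constant;
so are the elements with a small nonzero multiple that is a difference of two of them.

Globally, there are enough first coordinates. The ternary form in `b`, `c`, `d` has small additive
energy over boxes, so it takes a positive proportion of the values of the right size. Hence some `n`
has a positive proportion of the integers of house at most `X` as first coordinates, where `n` has
house of order `X ^ 2`, and by pigeonhole every integer of house at most a multiple of `X` has a
small nonzero multiple that is a difference of two of these.

This lets `n` certify its own integrality at `v`: write `n` in base `ϱ`, with `ϱ` divisible by `v`,
as `x + ϱ * q` with `q` expressed through elements that are small compared with `√n`. If `n` had a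
pole at `v`, the right hand side would have a smaller one. The result is a diophantine set `D`
containing `𝓞 k` such that `κ * D` is `v`-integral for some `κ ≠ 0`.

Finally let `ρ` generate a high power of `v`. By weak approximation, an element of `k` which is an
`m`-th power in the completion is, up to an `m`-th power of `k`, close to `1` at `v`, hence of the
form `(1 + ρ * c) / (1 + ρ * d)` with `c`, `d` algebraic integers. Conversely, by Hensel's lemma,
such quotients with `c`, `d` in `D` are `m`-th powers in the completion.
-/

open NumberField

section Separated

variable {α Φ : Type*} [Fintype Φ]

theorem card_le_pow_of_separated {S : Finset α} {c : α → Φ → ℝ} {s : Φ → ℝ} {M : ℕ}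
    (hs : ∀ φ, 0 < s φ) (hbound : ∀ x ∈ S, ∀ φ, |c x φ| ≤ M * s φ)
    (hsep : ∀ x ∈ S, ∀ y ∈ S, x ≠ y → ∃ φ, s φ ≤ |c x φ - c y φ|) :
    S.card ≤ (2 * M + 1) ^ Fintype.card Φ := by
  classical
  let cell : α → Φ → ℤ := fun x φ ↦ ⌊c x φ / s φ⌋
  have hmaps : ∀ x ∈ S, cell x ∈ Fintype.piFinset fun _ : Φ ↦ Finset.Icc (-(M : ℤ)) M := by
    intro x hx
    rw [Fintype.mem_piFinset]
    intro φ
    have h : |c x φ / s φ| ≤ M := by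
      rw [abs_div, abs_of_pos (hs φ), div_le_iff₀ (hs φ)]
      exact hbound x hx φ
    rw [abs_le] at h
    rw [Finset.mem_Icc, Int.le_floor]
    exact ⟨by exact_mod_cast h.1, by exact_mod_cast (Int.floor_le _).trans h.2⟩
  have hinj : Set.InjOn cell S := by
    intro x hx y hy hxy
    by_contra hne
    obtain ⟨φ, hφ⟩ := hsep x hx y hy hne
    have := Int.abs_sub_lt_one_of_floor_eq_floor (congrFun hxy φ)
    rw [← sub_div, abs_div, abs_of_pos (hs φ), div_lt_one (hs φ)] at this
    exact this.not_ge hφ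
  have hcard := Finset.card_le_card_of_injOn cell hmaps hinj
  have hwidth : ((M : ℤ) + 1 - -M).toNat = 2 * M + 1 := by omega
  simpa only [Fintype.card_piFinset, Int.card_Icc, Finset.prod_const, Finset.card_univ,
    hwidth] using hcard

end Separated

section RealCoord

variable {F : Type*} [Field F]

/-- `Re φ(x) + Im φ(x)`. For an embedding `φ` with conjugate `φ'`, the two real numbers
`realCoord φ x` and `realCoord φ' x` together determine `φ x`, so these coordinates serve real
and complex embeddings uniformly. -/
noncomputable def realCoord (φ : F →+* ℂ) (x : F) : ℝ := (φ x).re + (φ x).im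

theorem realCoord_sub (φ : F →+* ℂ) (x y : F) :
    realCoord φ (x - y) = realCoord φ x - realCoord φ y := by
  simp only [realCoord, map_sub, Complex.sub_re, Complex.sub_im]
  ring

theorem abs_realCoord_le (φ : F →+* ℂ) (x : F) : |realCoord φ x| ≤ 2 * ‖φ x‖ := by
  have hre := Complex.abs_re_le_norm (φ x)
  have him := Complex.abs_im_le_norm (φ x)
  have := abs_add_le (φ x).re (φ x).im
  unfold realCoord
  linarith

theorem norm_lt_of_abs_realCoord_lt {φ : F →+* ℂ} {x : F} {s : ℝ} (h : |realCoord φ x| < s)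
    (hconj : |realCoord (ComplexEmbedding.conjugate φ) x| < s) : ‖φ x‖ < s := by
  have hs : 0 < s := (abs_nonneg _).trans_lt h
  have hnorm : ‖φ x‖ ^ 2 = (φ x).re ^ 2 + (φ x).im ^ 2 := by
    rw [Complex.sq_norm, Complex.normSq_apply]; ring
  have h1 := sq_lt_sq' (neg_lt_of_abs_lt h) (lt_of_abs_lt h)
  have h2 := sq_lt_sq' (neg_lt_of_abs_lt hconj) (lt_of_abs_lt hconj)
  simp only [realCoord, ComplexEmbedding.conjugate_coe_eq, Complex.conj_re,
    Complex.conj_im] at h1 h2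
  exact lt_of_pow_lt_pow_left₀ 2 hs.le (by nlinarith)

end RealCoord

section Boxes

variable {k : Type*} [Field k] [NumberField k]

theorem absNorm_span_singleton_eq_prod (x : 𝓞 k) :
    ((Ideal.span {x}).absNorm : ℝ) = ∏ φ : k →+* ℂ, ‖φ x‖ := by
  have hprod : (Algebra.norm ℚ (x : k) : ℂ) = ∏ φ : k →+* ℂ, φ x := by
    have h := Algebra.norm_eq_prod_embeddings ℚ ℂ (x : k)
    rw [← Fintype.prod_equiv (RingHom.equivRatAlgHom (R := k) (S := ℂ)) (fun φ ↦ φ (x : k)) _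
      (fun φ ↦ rfl)] at h
    simpa using h
  rw [← norm_prod, ← hprod, Ideal.absNorm_span_singleton, ← Algebra.coe_norm_int, Nat.cast_natAbs]
  simp

theorem absNorm_pos_of_ne_bot {J : Ideal (𝓞 k)} (hJ : J ≠ ⊥) : (0 : ℝ) < J.absNorm := by
  exact_mod_cast Nat.pos_of_ne_zero (mt Ideal.absNorm_eq_zero_iff.1 hJ)

theorem absNorm_span_singleton_pos {x : 𝓞 k} (hx : x ≠ 0) :
    (0 : ℝ) < (Ideal.span {x}).absNorm :=
  absNorm_pos_of_ne_bot (by simpa using hx)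

theorem absNorm_le_absNorm_span_singleton {J : Ideal (𝓞 k)} {x : 𝓞 k} (hx : x ∈ J) (h0 : x ≠ 0) :
    (J.absNorm : ℝ) ≤ (Ideal.span {x}).absNorm := by
  have hpos := absNorm_span_singleton_pos h0
  exact_mod_cast Nat.le_of_dvd (by exact_mod_cast hpos)
    (Ideal.absNorm_dvd_absNorm_of_le ((Ideal.span_singleton_le_iff_mem _).2 hx))

theorem absNorm_lt_prod_of_abs_realCoord_lt {J : Ideal (𝓞 k)} {x : 𝓞 k} (hx : x ∈ J) (h0 : x ≠ 0)
    {s : (k →+* ℂ) → ℝ} (hsymm : ∀ φ, s (ComplexEmbedding.conjugate φ) = s φ)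
    (h : ∀ φ, |realCoord φ (x : k)| < s φ) : (J.absNorm : ℝ) < ∏ φ, s φ := by
  refine (absNorm_le_absNorm_span_singleton hx h0).trans_lt ?_
  rw [absNorm_span_singleton_eq_prod]
  refine Finset.prod_lt_prod_of_nonempty (fun φ _ ↦ ?_) (fun φ _ ↦ ?_) Finset.univ_nonempty
  · exact norm_pos_iff.2 ((map_ne_zero φ).2 (RingOfIntegers.coe_ne_zero_iff.2 h0))
  · exact norm_lt_of_abs_realCoord_lt (h φ) (hsymm φ ▸ h _)

theorem exists_nat_le_pow_and_pow_le {N : ℕ} (hN : N ≠ 0) {Q : ℝ} (hQ : 0 < Q) :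
    ∃ M : ℕ, 0 < M ∧ Q ≤ (M : ℝ) ^ N ∧ (4 * M + 1 : ℝ) ^ N ≤ 9 ^ N * (1 + Q) := by
  obtain ⟨q, hq, rfl⟩ : ∃ q : ℝ, 0 < q ∧ q ^ N = Q :=
    ⟨Q ^ ((N : ℝ)⁻¹), by positivity, Real.rpow_inv_natCast_pow hQ.le hN⟩
  refine ⟨⌈q⌉₊, Nat.ceil_pos.2 hq, by gcongr; exact Nat.le_ceil q, ?_⟩
  have hceil : (⌈q⌉₊ : ℝ) < q + 1 := Nat.ceil_lt_add_one hq.le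
  calc (4 * ⌈q⌉₊ + 1 : ℝ) ^ N ≤ (9 * max 1 q) ^ N := by
        gcongr
        linarith [le_max_left 1 q, le_max_right 1 q]
    _ = 9 ^ N * max 1 q ^ N := mul_pow ..
    _ ≤ 9 ^ N * (1 + q ^ N) := by
        gcongr
        rcases max_choice 1 q with h | h <;> rw [h] <;> linarith [pow_pos hq N, one_pow (M := ℝ) N]

/-- A nonzero difference of two elements of `J` has norm at least that of `J`, so distinct elements
of `J` cannot be close at all the embeddings. -/
theorem card_le_of_symmetric_box {J : Ideal (𝓞 k)} (hJ : J ≠ ⊥) {τ : (k →+* ℂ) → ℝ}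
    (hτ : ∀ φ, 0 < τ φ) (hsymm : ∀ φ, τ (ComplexEmbedding.conjugate φ) = τ φ)
    {S : Finset (𝓞 k)} (hSJ : ∀ x ∈ S, x ∈ J) (hS : ∀ x ∈ S, ∀ φ : k →+* ℂ, ‖φ x‖ ≤ τ φ) :
    (S.card : ℝ) ≤ 9 ^ Module.finrank ℚ k * (1 + (∏ φ, τ φ) / J.absNorm) := by
  have hN := absNorm_pos_of_ne_bot hJ
  obtain ⟨M, hM, hle, hpow⟩ := exists_nat_le_pow_and_pow_le
    (Module.finrank_pos (R := ℚ) (M := k)).ne' (div_pos (Finset.prod_pos fun φ _ ↦ hτ φ) hN)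
  have hM' : (0 : ℝ) < M := by exact_mod_cast hM
  have hprod : ∏ φ, τ φ / M ≤ J.absNorm := by
    rw [Finset.prod_div_distrib, Finset.prod_const, Finset.card_univ, Embeddings.card,
      div_le_iff₀ (by positivity)]
    rwa [div_le_iff₀ hN, mul_comm] at hle
  have hcard : S.card ≤ (2 * (2 * M) + 1) ^ Fintype.card (k →+* ℂ) := by
    refine card_le_pow_of_separated (M := 2 * M) (c := fun (x : 𝓞 k) φ ↦ realCoord φ (x : k))
      (s := fun φ ↦ τ φ / M) (fun φ ↦ div_pos (hτ φ) hM') (fun x hx φ ↦ ?_) fun x hx y hy hxy ↦ ?_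
    · calc |realCoord φ (x : k)| ≤ 2 * ‖φ x‖ := abs_realCoord_le φ _
        _ ≤ 2 * τ φ := by gcongr; exact hS x hx φ
        _ = (2 * M : ℕ) * (τ φ / M) := by push_cast; field_simp
    · by_contra! h
      refine (absNorm_lt_prod_of_abs_realCoord_lt (s := fun φ ↦ τ φ / M)
        (J.sub_mem (hSJ x hx) (hSJ y hy)) (sub_ne_zero.2 hxy) (fun φ ↦ by rw [hsymm])
        ?_).not_ge hprod
      intro φ
      simpa only [map_sub, realCoord_sub] using h φ
  rw [Embeddings.card] at hcard
  calc (S.card : ℝ) ≤ (4 * M + 1) ^ Module.finrank ℚ k := by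
        rw [← mul_assoc] at hcard
        exact_mod_cast hcard
    _ ≤ _ := hpow

theorem card_le_of_box {J : Ideal (𝓞 k)} (hJ : J ≠ ⊥) {τ : (k →+* ℂ) → ℝ} (hτ : ∀ φ, 0 < τ φ)
    {S : Finset (𝓞 k)} (hSJ : ∀ x ∈ S, x ∈ J) (hS : ∀ x ∈ S, ∀ φ : k →+* ℂ, ‖φ x‖ ≤ τ φ) :
    (S.card : ℝ) ≤ 9 ^ Module.finrank ℚ k * (1 + (∏ φ, τ φ) / J.absNorm) := by
  let τ' : (k →+* ℂ) → ℝ := fun φ ↦ min (τ φ) (τ (ComplexEmbedding.conjugate φ))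
  refine (card_le_of_symmetric_box hJ (τ := τ') (fun φ ↦ lt_min (hτ _) (hτ _)) (fun φ ↦ ?_) hSJ
    fun x hx φ ↦ le_min (hS x hx φ) ?_).trans ?_
  · simp only [τ', ComplexEmbedding.involutive_conjugate k φ, min_comm]
  · simpa [ComplexEmbedding.conjugate_coe_eq] using hS x hx (ComplexEmbedding.conjugate φ)
  · gcongr with φ
    · exact fun φ _ ↦ (lt_min (hτ _) (hτ _)).le
    · exact min_le_left _ _

theorem card_le_of_box_of_ne_zero {J : Ideal (𝓞 k)} (hJ : J ≠ ⊥) {τ : (k →+* ℂ) → ℝ}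
    (hτ : ∀ φ, 0 < τ φ) {S : Finset (𝓞 k)} (hSJ : ∀ x ∈ S, x ∈ J) (hS0 : ∀ x ∈ S, x ≠ 0)
    (hS : ∀ x ∈ S, ∀ φ : k →+* ℂ, ‖φ x‖ ≤ τ φ) :
    (S.card : ℝ) ≤ 2 * 9 ^ Module.finrank ℚ k / J.absNorm * ∏ φ, τ φ := by
  have hN := absNorm_pos_of_ne_bot hJ
  have hprod := Finset.prod_pos fun φ (_ : φ ∈ Finset.univ) ↦ hτ φ
  rcases S.eq_empty_or_nonempty with rfl | ⟨x, hx⟩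
  · rw [Finset.card_empty, Nat.cast_zero]
    positivity
  have hone : 1 ≤ (∏ φ, τ φ) / J.absNorm := by
    rw [one_le_div hN]
    refine (absNorm_le_absNorm_span_singleton (hSJ x hx) (hS0 x hx)).trans ?_
    rw [absNorm_span_singleton_eq_prod]
    exact Finset.prod_le_prod (fun φ _ ↦ norm_nonneg _) fun φ _ ↦ hS x hx φ
  calc (S.card : ℝ) ≤ 9 ^ Module.finrank ℚ k * (1 + (∏ φ, τ φ) / J.absNorm) :=
        card_le_of_box hJ hτ hSJ hS
    _ ≤ 9 ^ Module.finrank ℚ k * (2 * ((∏ φ, τ φ) / J.absNorm)) := by gcongr; linarith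
    _ = _ := by ring

end Boxes

section Dyadic

theorem sum_range_pow_le_inv_one_sub {r : ℝ} (h0 : 0 ≤ r) (h1 : r < 1) (E : ℕ) :
    ∑ j ∈ Finset.range E, r ^ j ≤ (1 - r)⁻¹ := by
  rw [← tsum_geometric_of_lt_one h0 h1]
  exact (summable_geometric_of_lt_one h0 h1).sum_le_tsum _ fun j _ ↦ pow_nonneg h0 j

theorem exists_div_two_pow_le {t X : ℝ} (ht : 0 < t) (htX : t ≤ X) :
    ∃ e : ℕ, t ≤ X / 2 ^ e ∧ X / 2 ^ e / 2 ≤ t := by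
  obtain ⟨e, hle, hlt⟩ := exists_nat_pow_near ((one_le_div ht).2 htX) one_lt_two
  rw [le_div_iff₀ ht] at hle
  rw [div_lt_iff₀ ht, pow_succ] at hlt
  refine ⟨e, ?_, ?_⟩
  · rw [le_div_iff₀ (by positivity)]; linarith
  · rw [div_div, div_le_iff₀ (by positivity)]; linarith

theorem mul_half_rpow_neg {y : ℝ} (hy : 0 < y) (s : ℝ) :
    y * (y / 2) ^ (-s) = 2 ^ s * y ^ (1 - s) := by
  rw [Real.div_rpow hy.le zero_le_two, Real.rpow_neg zero_le_two, div_inv_eq_mul,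
    sub_eq_add_neg, Real.rpow_add hy, Real.rpow_one]
  ring

theorem div_two_pow_rpow {X : ℝ} (hX : 0 ≤ X) (s : ℝ) (e : ℕ) :
    (X / 2 ^ e) ^ (1 - s) = X ^ (1 - s) * ((2 : ℝ) ^ (s - 1)) ^ e := by
  rw [Real.div_rpow hX (by positivity), ← Real.rpow_natCast_mul zero_le_two,
    ← Real.rpow_mul_natCast zero_le_two, div_eq_mul_inv, ← Real.rpow_neg zero_le_two]
  congr 2
  ring

theorem exists_dyadic_exponents {α Φ : Type*} [Finite Φ] {S : Finset α} {a : α → Φ → ℝ} {X : ℝ}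
    (ha0 : ∀ x ∈ S, ∀ φ, 0 < a x φ) (haX : ∀ x ∈ S, ∀ φ, a x φ ≤ X) :
    ∃ (e : α → Φ → ℕ) (E : ℕ), ∀ x ∈ S, ∀ φ,
      e x φ < E ∧ a x φ ≤ X / 2 ^ e x φ ∧ X / 2 ^ e x φ / 2 ≤ a x φ := by
  cases nonempty_fintype Φ
  have hexp (x : α) (φ : Φ) : ∃ e : ℕ, x ∈ S → a x φ ≤ X / 2 ^ e ∧ X / 2 ^ e / 2 ≤ a x φ := by
    by_cases hx : x ∈ S
    · simpa only [hx, true_imp_iff] using exists_div_two_pow_le (ha0 x hx φ) (haX x hx φ)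
    · exact ⟨0, fun h ↦ absurd h hx⟩
  choose e he using hexp
  refine ⟨e, (S.sup fun x ↦ Finset.univ.sup (e x)) + 1, fun x hx φ ↦ ⟨?_, he x φ hx⟩⟩
  exact Nat.lt_succ_of_le ((Finset.le_sup (Finset.mem_univ φ)).trans
    (Finset.le_sup (f := fun x ↦ Finset.univ.sup (e x)) hx))

variable {α Φ : Type*} [Fintype Φ] {S : Finset α} {a : α → Φ → ℝ} {B s : ℝ}

theorem sum_prod_rpow_neg_le_of_half_le {y : Φ → ℝ} (hs : 0 ≤ s) (hy : ∀ φ, 0 < y φ)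
    (ha : ∀ x ∈ S, ∀ φ, y φ / 2 ≤ a x φ) (hcard : (S.card : ℝ) ≤ B * ∏ φ, y φ) :
    ∑ x ∈ S, ∏ φ, a x φ ^ (-s) ≤ B * ∏ φ, (2 ^ s * y φ ^ (1 - s)) := by
  have hpow (φ) : 0 < (y φ / 2) ^ (-s) := Real.rpow_pos_of_pos (half_pos (hy φ)) _
  calc ∑ x ∈ S, ∏ φ, a x φ ^ (-s) ≤ ∑ _x ∈ S, ∏ φ, (y φ / 2) ^ (-s) := by
        refine Finset.sum_le_sum fun x hx ↦ Finset.prod_le_prod (fun φ _ ↦ ?_) fun φ _ ↦ ?_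
        · exact Real.rpow_nonneg ((half_pos (hy φ)).le.trans (ha x hx φ)) _
        · exact Real.rpow_le_rpow_of_nonpos (half_pos (hy φ)) (ha x hx φ) (neg_nonpos.2 hs)
    _ = S.card * ∏ φ, (y φ / 2) ^ (-s) := by rw [Finset.sum_const, nsmul_eq_mul]
    _ ≤ B * (∏ φ, y φ) * ∏ φ, (y φ / 2) ^ (-s) := by
        gcongr
        exact Finset.prod_nonneg fun φ _ ↦ (hpow φ).le
    _ = B * ∏ φ, (2 ^ s * y φ ^ (1 - s)) := by
        rw [mul_assoc, ← Finset.prod_mul_distrib]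
        simp only [mul_half_rpow_neg (hy _)]

theorem sum_prod_rpow_neg_le {X : ℝ} (hs0 : 0 ≤ s) (hs1 : s < 1) (hX : 0 < X)
    (ha0 : ∀ x ∈ S, ∀ φ, 0 < a x φ) (haX : ∀ x ∈ S, ∀ φ, a x φ ≤ X)
    (hcount : ∀ τ : Φ → ℝ, (∀ φ, 0 < τ φ) → ∀ T ⊆ S, (∀ x ∈ T, ∀ φ, a x φ ≤ τ φ) →
      (T.card : ℝ) ≤ B * ∏ φ, τ φ) :
    ∑ x ∈ S, ∏ φ, a x φ ^ (-s) ≤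
      B * (2 ^ s * X ^ (1 - s) * (1 - 2 ^ (s - 1))⁻¹) ^ Fintype.card Φ := by
  classical
  have hB : 0 ≤ B := by simpa using hcount 1 (by simp) ∅ (by simp) (by simp)
  have hr1 : (2 : ℝ) ^ (s - 1) < 1 := Real.rpow_lt_one_of_one_lt_of_neg one_lt_two (by linarith)
  obtain ⟨e, E, he⟩ := exists_dyadic_exponents ha0 haX
  have hE : ∀ x ∈ S, e x ∈ Fintype.piFinset fun _ ↦ Finset.range E := fun x hx ↦
    Fintype.mem_piFinset.2 fun φ ↦ Finset.mem_range.2 (he x hx φ).1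
  have hfiber (ε : Φ → ℕ) : ∑ x ∈ S with e x = ε, ∏ φ, a x φ ^ (-s) ≤
      B * ∏ φ, (2 ^ s * (X / 2 ^ ε φ) ^ (1 - s)) := by
    have hmem (x) (hx : x ∈ S.filter (e · = ε)) (φ) :
        a x φ ≤ X / 2 ^ ε φ ∧ X / 2 ^ ε φ / 2 ≤ a x φ := by
      obtain ⟨hxS, rfl⟩ := Finset.mem_filter.1 hx
      exact (he x hxS φ).2
    exact sum_prod_rpow_neg_le_of_half_le hs0 (fun φ ↦ by positivity) (fun x hx φ ↦ (hmem x hx φ).2)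
      (hcount _ (fun φ ↦ by positivity) _ (Finset.filter_subset _ _) fun x hx φ ↦ (hmem x hx φ).1)
  calc ∑ x ∈ S, ∏ φ, a x φ ^ (-s)
      = ∑ ε ∈ Fintype.piFinset fun _ ↦ Finset.range E, ∑ x ∈ S with e x = ε, ∏ φ, a x φ ^ (-s) :=
        (Finset.sum_fiberwise_of_maps_to hE _).symm
    _ ≤ ∑ ε ∈ Fintype.piFinset fun _ : Φ ↦ Finset.range E,
          B * ∏ φ, (2 ^ s * (X / 2 ^ ε φ) ^ (1 - s)) := Finset.sum_le_sum fun ε _ ↦ hfiber ε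
    _ = B * (2 ^ s * X ^ (1 - s) * ∑ j ∈ Finset.range E, ((2 : ℝ) ^ (s - 1)) ^ j) ^
          Fintype.card Φ := by
        simp only [div_two_pow_rpow hX.le, ← mul_assoc]
        rw [← Finset.mul_sum, Finset.mul_sum _ _ (2 ^ s * X ^ (1 - s)), ← Finset.card_univ,
          ← Finset.prod_const, Finset.prod_univ_sum]
    _ ≤ B * (2 ^ s * X ^ (1 - s) * (1 - 2 ^ (s - 1))⁻¹) ^ Fintype.card Φ := by
        have hsum : 0 ≤ ∑ j ∈ Finset.range E, ((2 : ℝ) ^ (s - 1)) ^ j :=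
          Finset.sum_nonneg fun j _ ↦ by positivity
        gcongr
        exact sum_range_pow_le_inv_one_sub (by positivity) hr1 E

end Dyadic

section House

variable {k : Type*} [Field k] [NumberField k]

theorem house_le_iff {x : k} {X : ℝ} (hX : 0 ≤ X) : house x ≤ X ↔ ∀ φ : k →+* ℂ, ‖φ x‖ ≤ X := by
  rw [house, pi_norm_le_iff_of_nonneg hX]
  rfl

theorem house_ratCast (q : ℚ) : house (q : k) = |(q : ℝ)| := by
  apply le_antisymm
  · simp [house_le_iff (abs_nonneg _)]
  · obtain ⟨φ⟩ : Nonempty (k →+* ℂ) := inferInstance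
    simpa using norm_embedding_le_house (q : k) φ

theorem house_neg (x : k) : house (-x) = house x := by
  rw [house, house, map_neg, norm_neg]

theorem house_sub_le (x y : k) : house (x - y) ≤ house x + house y := by
  simpa only [sub_eq_add_neg, house_neg] using house_add_le x (-y)

theorem house_sum_mul_le {ι : Type*} [Fintype ι] (a b : ι → k) {Y : ℝ} (h : ∀ i, house (a i) ≤ Y) :
    house (∑ i, a i * b i) ≤ Y * ∑ i, house (b i) := by
  refine (house_sum_le_sum_house _ _).trans ?_
  rw [Finset.mul_sum]
  exact Finset.sum_le_sum fun i _ ↦ (house_mul_le _ _).trans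
    (mul_le_mul_of_nonneg_right (h i) (house_nonneg _))

variable (k) in
theorem finite_setOf_house_le (X : ℝ) : {x : 𝓞 k | house (x : k) ≤ X}.Finite := by
  refine Set.Finite.of_finite_image (f := fun x : 𝓞 k ↦ (x : k))
    ((Embeddings.finite_of_norm_le k ℂ X).subset ?_) RingOfIntegers.coe_injective.injOn
  rintro _ ⟨x, hx, rfl⟩
  exact ⟨RingOfIntegers.isIntegral_coe x, fun φ ↦ (norm_embedding_le_house _ φ).trans hx⟩

variable (k) in
/-- The set of algebraic integers all of whose conjugates are bounded by `X`. Its size is of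
order `X ^ [k : ℚ]`, so it plays the role of the interval `[-X, X]` in `ℤ`. -/
noncomputable def houseBall (X : ℝ) : Finset (𝓞 k) := (finite_setOf_house_le k X).toFinset

@[simp] theorem mem_houseBall {X : ℝ} {x : 𝓞 k} : x ∈ houseBall k X ↔ house (x : k) ≤ X := by
  simp [houseBall]

theorem absNorm_span_singleton_le_pow {x : 𝓞 k} {X : ℝ} (hx : x ∈ houseBall k X) :
    ((Ideal.span {x}).absNorm : ℝ) ≤ X ^ Module.finrank ℚ k := by
  rw [absNorm_span_singleton_eq_prod, ← Embeddings.card k ℂ, ← Finset.card_univ,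
    ← Finset.prod_const]
  exact Finset.prod_le_prod (fun φ _ ↦ norm_nonneg _) fun φ _ ↦
    (norm_embedding_le_house _ φ).trans (mem_houseBall.1 hx)

theorem card_houseBall_le {X : ℝ} (hX : 1 ≤ X) :
    ((houseBall k X).card : ℝ) ≤ 2 * 9 ^ Module.finrank ℚ k * X ^ Module.finrank ℚ k := by
  have h := card_le_of_box (J := ⊤) top_ne_bot (τ := fun _ ↦ X) (fun _ ↦ by linarith)
    (S := houseBall k X) (fun _ _ ↦ Submodule.mem_top)
    fun x hx φ ↦ (norm_embedding_le_house _ φ).trans (mem_houseBall.1 hx)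
  rw [Ideal.absNorm_top, Nat.cast_one, div_one, Finset.prod_const, Finset.card_univ,
    Embeddings.card] at h
  have h1 : 1 ≤ X ^ Module.finrank ℚ k := one_le_pow₀ hX
  calc _ ≤ _ := h
    _ ≤ 9 ^ Module.finrank ℚ k * (2 * X ^ Module.finrank ℚ k) := by gcongr; linarith
    _ = _ := by ring

end House

section IntegralBasis

variable {k : Type*} [Field k] [NumberField k]

variable (k) in
/-- A constant `B ≥ 1` such that integral combinations of the integral basis with coefficients at
most `Y` in absolute value have house at most `Y * B`. -/
noncomputable def basisBound : ℝ := 1 + ∑ i, house (RingOfIntegers.basis k i : k)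

theorem one_le_basisBound : 1 ≤ basisBound k :=
  le_add_of_nonneg_right (Finset.sum_nonneg fun _ _ ↦ house_nonneg _)

theorem house_sum_basis_le (a : Module.Free.ChooseBasisIndex ℤ (𝓞 k) → k) {Y : ℝ} (hY : 0 ≤ Y)
    (h : ∀ i, house (a i) ≤ Y) :
    house (∑ i, a i * (RingOfIntegers.basis k i : k)) ≤ Y * basisBound k := by
  refine (house_sum_mul_le _ _ h).trans ?_
  gcongr
  exact le_add_of_nonneg_left zero_le_one

theorem le_card_houseBall {X : ℝ} (hX : 0 ≤ X) :
    (X / basisBound k) ^ Module.finrank ℚ k ≤ (houseBall k X).card := by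
  classical
  have hB : 0 < basisBound k := zero_lt_one.trans_le one_le_basisBound
  set A := ⌊X / basisBound k⌋₊
  let box := Fintype.piFinset fun _ : Module.Free.ChooseBasisIndex ℤ (𝓞 k) ↦ Finset.range (A + 1)
  let f : (Module.Free.ChooseBasisIndex ℤ (𝓞 k) → ℕ) → 𝓞 k :=
    fun a ↦ ∑ i, (a i : ℤ) • RingOfIntegers.basis k i
  have hmaps : ∀ a ∈ box, f a ∈ houseBall k X := by
    intro a ha
    have hcoe : (f a : k) = ∑ i, ((a i : ℤ) : k) * (RingOfIntegers.basis k i : k) := by simp [f]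
    rw [mem_houseBall, hcoe]
    refine (house_sum_basis_le _ A.cast_nonneg fun i ↦ ?_).trans
      ((le_div_iff₀ hB).1 (Nat.floor_le (by positivity)))
    have hi := Nat.lt_succ_iff.1 (Finset.mem_range.1 (Fintype.mem_piFinset.1 ha i))
    rw [house_intCast]
    simpa using hi
  have hinj : Set.InjOn f box := by
    intro a _ b _ hab
    funext i
    have h := DFunLike.congr_fun (congrArg (RingOfIntegers.basis k).repr hab) i
    simp only [f, Module.Basis.repr_sum_self] at h
    exact_mod_cast h
  have hcard := Finset.card_le_card_of_injOn f hmaps hinj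
  rw [Fintype.card_piFinset, Finset.card_range, Finset.prod_const, Finset.card_univ,
    ← Module.finrank_eq_card_chooseBasisIndex, RingOfIntegers.rank] at hcard
  calc (X / basisBound k) ^ Module.finrank ℚ k ≤ (A + 1 : ℝ) ^ Module.finrank ℚ k := by
        gcongr
        exact (Nat.lt_floor_add_one _).le
    _ ≤ (houseBall k X).card := by exact_mod_cast hcard

theorem exists_dvd_sub_house_le {m : 𝓞 k} (hm : m ≠ 0) (b : 𝓞 k) :
    ∃ x : 𝓞 k, m ∣ x - b ∧ house (x : k) ≤ basisBound k * house (m : k) := by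
  have hm' : (m : k) ≠ 0 := RingOfIntegers.coe_ne_zero_iff.2 hm
  set q := fun i ↦ (integralBasis k).repr ((b : k) / m) i
  have hquot : (b : k) / m = ∑ i, (q i : k) * (RingOfIntegers.basis k i : k) := by
    rw [← (integralBasis k).sum_repr ((b : k) / m)]
    refine Finset.sum_congr rfl fun i _ ↦ ?_
    simp [integralBasis_apply, Algebra.smul_def, q]
  set y : 𝓞 k := ∑ i, ⌊q i⌋ • RingOfIntegers.basis k i
  refine ⟨b - m * y, ⟨-y, by ring⟩, ?_⟩
  have hfract : ((b - m * y : 𝓞 k) : k) =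
      m * ∑ i, ((Int.fract (q i) : ℚ) : k) * (RingOfIntegers.basis k i : k) := by
    have hy : (y : k) = ∑ i, (⌊q i⌋ : k) * (RingOfIntegers.basis k i : k) := by
      simp [y, zsmul_eq_mul]
    have hb : (b : k) = m * ((b : k) / m) := by field_simp
    have hcoe : ((b - m * y : 𝓞 k) : k) = b - m * y := by simp
    rw [hcoe, hy, hb, hquot, ← mul_sub, ← Finset.sum_sub_distrib]
    simp only [← sub_mul, Int.fract, Rat.cast_sub, Rat.cast_intCast]
  rw [hfract, mul_comm (basisBound k)]
  refine (house_mul_le _ _).trans (mul_le_mul_of_nonneg_left ?_ (house_nonneg _))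
  rw [← one_mul (basisBound k)]
  refine house_sum_basis_le _ zero_le_one fun i ↦ ?_
  rw [house_ratCast, abs_of_nonneg (by exact_mod_cast Int.fract_nonneg _)]
  exact_mod_cast (Int.fract_lt_one _).le

end IntegralBasis

section NormWeight

variable {k : Type*} [Field k] [NumberField k]

/-- The weight `|N(x)| ^ (-s)`, extended by the value `1` at `0`. -/
noncomputable def normWeight (s : ℝ) (x : 𝓞 k) : ℝ := max 1 ((Ideal.span {x}).absNorm : ℝ) ^ (-s)

theorem normWeight_pos (s : ℝ) (x : 𝓞 k) : 0 < normWeight s x := by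
  unfold normWeight
  positivity

theorem normWeight_zero (s : ℝ) : normWeight s (0 : 𝓞 k) = 1 := by
  simp [normWeight]

theorem one_le_absNorm_span_singleton {x : 𝓞 k} (hx : x ≠ 0) :
    (1 : ℝ) ≤ (Ideal.span {x}).absNorm := by
  exact_mod_cast Nat.succ_le_of_lt (by exact_mod_cast absNorm_span_singleton_pos hx)

theorem normWeight_of_ne_zero (s : ℝ) {x : 𝓞 k} (hx : x ≠ 0) :
    normWeight s x = ∏ φ : k →+* ℂ, ‖φ x‖ ^ (-s) := by
  rw [normWeight, max_eq_right (one_le_absNorm_span_singleton hx), absNorm_span_singleton_eq_prod,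
    Real.finsetProd_rpow _ _ fun φ _ ↦ norm_nonneg _]

theorem exists_sum_normWeight_le {s : ℝ} (hs0 : 0 ≤ s) (hs1 : s < 1) :
    ∃ C : ℝ, 0 < C ∧ ∀ X : ℝ, 0 < X → ∀ J : Ideal (𝓞 k), J ≠ ⊥ → ∀ S ⊆ houseBall k X,
      (∀ x ∈ S, x ∈ J) → ∑ x ∈ S, normWeight s x ≤
        1 + C * (X ^ Module.finrank ℚ k) ^ (1 - s) / J.absNorm := by
  classical
  have hr : 0 < 1 - (2 : ℝ) ^ (s - 1) :=
    sub_pos.2 (Real.rpow_lt_one_of_one_lt_of_neg one_lt_two (by linarith))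
  refine ⟨2 * 9 ^ Module.finrank ℚ k * (2 ^ s * (1 - 2 ^ (s - 1))⁻¹) ^ Module.finrank ℚ k,
    by positivity, fun X hX J hJ S hS hSJ ↦ ?_⟩
  have hT {x : 𝓞 k} (hx : x ∈ S.erase 0) : x ≠ 0 ∧ x ∈ S := Finset.mem_erase.1 hx
  have herase : ∑ x ∈ S.erase 0, normWeight s x ≤ 2 * 9 ^ Module.finrank ℚ k / J.absNorm *
      (2 ^ s * X ^ (1 - s) * (1 - 2 ^ (s - 1))⁻¹) ^ Module.finrank ℚ k := by
    rw [Finset.sum_congr rfl fun x hx ↦ normWeight_of_ne_zero s (hT hx).1, ← Embeddings.card k ℂ]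
    refine sum_prod_rpow_neg_le (a := fun (x : 𝓞 k) (φ : k →+* ℂ) ↦ ‖φ x‖) hs0 hs1 hX ?_ ?_ ?_
    · exact fun x hx φ ↦ norm_pos_iff.2
        ((map_ne_zero φ).2 (RingOfIntegers.coe_ne_zero_iff.2 (hT hx).1))
    · exact fun x hx φ ↦ (norm_embedding_le_house _ φ).trans (mem_houseBall.1 (hS (hT hx).2))
    · intro τ hτ T hTS hbox
      rw [Embeddings.card]
      exact card_le_of_box_of_ne_zero hJ hτ (fun x hx ↦ hSJ x (hT (hTS hx)).2)
        (fun x hx ↦ (hT (hTS hx)).1) hbox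
  calc ∑ x ∈ S, normWeight s x ≤ ∑ x ∈ insert 0 (S.erase 0), normWeight s x :=
        Finset.sum_le_sum_of_subset_of_nonneg (Finset.subset_insert_iff.2 subset_rfl)
          fun x _ _ ↦ (normWeight_pos s x).le
    _ = 1 + ∑ x ∈ S.erase 0, normWeight s x := by
        rw [Finset.sum_insert (Finset.notMem_erase _ _), normWeight_zero]
    _ ≤ _ := by
        refine add_le_add_right (herase.trans_eq ?_) 1
        rw [← Real.rpow_natCast_mul hX.le, mul_comm _ (1 - s), Real.rpow_mul_natCast hX.le]
        ring

end NormWeight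

section Kernel

variable {k : Type*} [Field k] [NumberField k] {ι : Type*} [Fintype ι]

variable (k ι) in
open scoped Classical in
/-- The vectors of algebraic integers with all coordinates in `houseBall k X`, the analogue of
`[-X, X] ^ ι` in `ℤ ^ ι`. -/
noncomputable def houseCube (X : ℝ) : Finset (ι → 𝓞 k) := Fintype.piFinset fun _ ↦ houseBall k X

@[simp] theorem mem_houseCube {X : ℝ} {m : ι → 𝓞 k} :
    m ∈ houseCube k ι X ↔ ∀ i, house (m i : k) ≤ X := by
  simp [houseCube]

theorem card_houseCube (X : ℝ) :
    (houseCube k ι X).card = (houseBall k X).card ^ Fintype.card ι := by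
  simp [houseCube]

theorem exists_finset_representatives {m : ι → 𝓞 k} {i₀ : ι} (h0 : m i₀ ≠ 0) :
    ∃ R : Finset (ι → 𝓞 k), R ⊆ houseCube k ι (basisBound k * house (m i₀ : k)) ∧
      (∀ y ∈ R, ∀ y' ∈ R, m i₀ ∣ m ⬝ᵥ y - m ⬝ᵥ y' → y = y') ∧
      R.card * (Ideal.span (Set.range m)).absNorm = (Ideal.span {m i₀}).absNorm := by
  classical
  set g := Ideal.span (Set.range m)
  set P := Ideal.span {m i₀}
  have hPg : P ≤ g :=
    (Ideal.span_singleton_le_iff_mem _).2 (Ideal.subset_span (Set.mem_range_self i₀))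
  have : Finite (𝓞 k ⧸ P) := Ideal.finiteQuotientOfFreeOfNeBot P (by simpa [P] using h0)
  have : Fintype (Submodule.map P.mkQ g) := Fintype.ofFinite _
  have hrep (c : Submodule.map P.mkQ g) :
      ∃ y ∈ houseCube k ι (basisBound k * house (m i₀ : k)), P.mkQ (m ⬝ᵥ y) = c := by
    obtain ⟨_, z, hz, rfl⟩ := c
    obtain ⟨b, rfl⟩ := Ideal.mem_span_range_iff_exists_fun.1 hz
    choose y hdvd hy using fun i ↦ exists_dvd_sub_house_le h0 (b i)
    refine ⟨y, mem_houseCube.2 hy, ?_⟩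
    change P.mkQ (m ⬝ᵥ y) = P.mkQ (∑ i, b i * m i)
    rw [Submodule.mkQ_apply, Submodule.mkQ_apply, Submodule.Quotient.eq, Ideal.mem_span_singleton,
      dotProduct, ← Finset.sum_sub_distrib]
    refine Finset.dvd_sum fun i _ ↦ ?_
    rw [mul_comm (b i), ← mul_sub]
    exact (hdvd i).mul_left _
  choose f hf hfc using hrep
  have hinj : Function.Injective f := fun c c' h ↦ Subtype.ext (by rw [← hfc c, ← hfc c', h])
  refine ⟨Finset.univ.image f, Finset.image_subset_iff.2 fun c _ ↦ hf c, ?_, ?_⟩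
  · simp only [Finset.mem_image, Finset.mem_univ, true_and]
    rintro _ ⟨c, rfl⟩ _ ⟨c', rfl⟩ hdvd
    refine congrArg f (Subtype.ext ?_)
    rwa [← hfc c, ← hfc c', Submodule.mkQ_apply, Submodule.mkQ_apply, Submodule.Quotient.eq,
      Ideal.mem_span_singleton]
  · rw [Finset.card_image_of_injective _ hinj, Finset.card_univ, ← Nat.card_eq_fintype_card,
      Ideal.absNorm_apply, Ideal.absNorm_apply, Submodule.cardQuot_apply, Submodule.cardQuot_apply]
    exact Submodule.card_quotient_mul_card_quotient g P hPg

theorem card_ker_mul_card_le {X : ℝ} {m : ι → 𝓞 k} {i₀ : ι} (h0 : m i₀ ≠ 0)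
    (hm : house (m i₀ : k) ≤ X) {R S : Finset (ι → 𝓞 k)}
    (hR : R ⊆ houseCube k ι (basisBound k * house (m i₀ : k)))
    (hRinj : ∀ y ∈ R, ∀ y' ∈ R, m i₀ ∣ m ⬝ᵥ y - m ⬝ᵥ y' → y = y')
    (hS : S ⊆ houseCube k ι X) (hker : ∀ κ ∈ S, m ⬝ᵥ κ = 0) :
    S.card * ((houseBall k X).card * R.card) ≤
      (houseCube k ι ((2 + basisBound k) * X)).card := by
  classical
  rw [← Finset.card_product, ← Finset.card_product]
  let f : (ι → 𝓞 k) × 𝓞 k × (ι → 𝓞 k) → ι → 𝓞 k := fun p ↦ p.1 + p.2.2 + Pi.single i₀ p.2.1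
  have hdot (p) (hp : p ∈ S ×ˢ houseBall k X ×ˢ R) :
      m ⬝ᵥ f p = m ⬝ᵥ p.2.2 + m i₀ * p.2.1 := by
    rw [dotProduct_add, dotProduct_add, hker _ (Finset.mem_product.1 hp).1, zero_add,
      dotProduct_single]
  refine Finset.card_le_card_of_injOn f ?_ ?_
  · rintro ⟨κ, j, y⟩ hp
    simp only [Finset.coe_product, Set.mem_prod, Finset.mem_coe, mem_houseBall] at hp
    obtain ⟨hκ, hj, hy⟩ := hp
    refine mem_houseCube.2 fun i ↦ ?_
    have hsingle : house ((Pi.single i₀ j : ι → 𝓞 k) i : k) ≤ X := by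
      rcases eq_or_ne i i₀ with rfl | hi
      · simpa using hj
      · simpa [hi, house] using (house_nonneg _).trans hm
    calc house (f (κ, j, y) i : k)
        = house ((κ i : k) + y i + (Pi.single i₀ j : ι → 𝓞 k) i) := by simp [f]
      _ ≤ house (κ i : k) + house (y i : k) + house ((Pi.single i₀ j : ι → 𝓞 k) i : k) :=
        (house_add_le _ _).trans (add_le_add_left (house_add_le _ _) _)
      _ ≤ X + basisBound k * X + X := by
        gcongr
        · exact mem_houseCube.1 (hS hκ) i
        · have := zero_lt_one.trans_le (one_le_basisBound (k := k))
          exact (mem_houseCube.1 (hR hy) i).trans (by gcongr)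
      _ = (2 + basisBound k) * X := by ring
  · rintro ⟨κ, j, y⟩ hp ⟨κ', j', y'⟩ hp' heq
    have hdots := (hdot _ hp).symm.trans ((congrArg (m ⬝ᵥ ·) heq).trans (hdot _ hp'))
    simp only [Finset.coe_product, Set.mem_prod, Finset.mem_coe] at hp hp' hdots
    obtain rfl : y = y' := hRinj y hp.2.2 y' hp'.2.2 ⟨j' - j, by linear_combination hdots⟩
    obtain rfl : j = j' := mul_left_cancel₀ h0 (add_left_cancel hdots)
    simpa [f] using heq

variable (k ι) in
theorem exists_card_ker_le : ∃ C : ℝ, 0 < C ∧ ∀ X : ℝ, 1 ≤ X → ∀ m ∈ houseCube k ι X, ∀ i₀,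
    m i₀ ≠ 0 → ∀ S ⊆ houseCube k ι X, (∀ κ ∈ S, m ⬝ᵥ κ = 0) →
      (S.card : ℝ) ≤ C * (X ^ Module.finrank ℚ k) ^ (Fintype.card ι - 1) *
        (Ideal.span (Set.range m)).absNorm / (Ideal.span {m i₀}).absNorm := by
  set N := Module.finrank ℚ k
  have hB : 0 < basisBound k := zero_lt_one.trans_le one_le_basisBound
  set W := 2 + basisBound k
  refine ⟨(2 * 9 ^ N * W ^ N) ^ Fintype.card ι * basisBound k ^ N, by positivity,
    fun X hX m hm i₀ h0 S hS hker ↦ ?_⟩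
  obtain ⟨R, hR, hRinj, hRcard⟩ := exists_finset_representatives h0
  have hcard := card_ker_mul_card_le h0 (mem_houseCube.1 hm i₀) hR hRinj hS hker
  rw [card_houseCube] at hcard
  have hX0 : 0 < X := by linarith
  have hnorm := absNorm_span_singleton_pos h0
  have hV : (X ^ N) ^ Fintype.card ι = (X ^ N) ^ (Fintype.card ι - 1) * X ^ N := by
    rw [← pow_succ, Nat.sub_add_cancel (Fintype.card_pos_iff.2 ⟨i₀⟩)]
  have hupper : (S.card : ℝ) * ((X / basisBound k) ^ N * R.card) ≤
      (2 * 9 ^ N * W ^ N) ^ Fintype.card ι * ((X ^ N) ^ (Fintype.card ι - 1) * X ^ N) :=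
    calc (S.card : ℝ) * ((X / basisBound k) ^ N * R.card)
        ≤ S.card * ((houseBall k X).card * R.card) := by
          gcongr
          exact le_card_houseBall hX0.le
      _ ≤ ((houseBall k (W * X)).card : ℝ) ^ Fintype.card ι := by exact_mod_cast hcard
      _ ≤ (2 * 9 ^ N * (W * X) ^ N) ^ Fintype.card ι := by
          gcongr
          exact card_houseBall_le (one_le_mul_of_one_le_of_one_le (by simp only [W]; linarith) hX)
      _ = _ := by rw [← hV, mul_pow W, ← mul_assoc, mul_pow _ (X ^ N)]
  have hSR : (S.card : ℝ) * R.card ≤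
      (2 * 9 ^ N * W ^ N) ^ Fintype.card ι * basisBound k ^ N * (X ^ N) ^ (Fintype.card ι - 1) := by
    rw [div_pow] at hupper
    field_simp at hupper
    linarith
  calc (S.card : ℝ) = S.card * R.card * (Ideal.span (Set.range m)).absNorm /
        (Ideal.span {m i₀}).absNorm := by
        rw [eq_div_iff hnorm.ne', ← hRcard, Nat.cast_mul, mul_assoc]
    _ ≤ _ := by gcongr

end Kernel

section IdealSums

theorem sum_inv_sq_le_of_card_le {α : Type*} {G : Finset α} {f : α → ℕ} {C : ℝ}
    (hf : ∀ g ∈ G, f g ≠ 0)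
    (hcount : ∀ Y : ℝ, 1 ≤ Y → ∀ T ⊆ G, (∀ g ∈ T, (f g : ℝ) ≤ Y) → (T.card : ℝ) ≤ C * Y) :
    ∑ g ∈ G, ((f g : ℝ) ^ 2)⁻¹ ≤ 4 * C := by
  classical
  have hC : 0 ≤ C := by simpa using hcount 1 le_rfl ∅ (by simp) (by simp)
  have hE : ∀ g ∈ G, Nat.log 2 (f g) ∈ Finset.range (G.sup (fun g ↦ Nat.log 2 (f g)) + 1) :=
    fun g hg ↦ Finset.mem_range.2
      (Nat.lt_succ_of_le (Finset.le_sup (f := fun g ↦ Nat.log 2 (f g)) hg))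
  have hfiber (e : ℕ) : ∑ g ∈ G with Nat.log 2 (f g) = e, ((f g : ℝ) ^ 2)⁻¹ ≤
      2 * C * (1 / 2) ^ e := by
    have hlog (g) (hg : g ∈ G.filter (fun g ↦ Nat.log 2 (f g) = e)) :
        (2 : ℝ) ^ e ≤ f g ∧ (f g : ℝ) ≤ 2 ^ (e + 1) := by
      obtain ⟨hgG, rfl⟩ := Finset.mem_filter.1 hg
      exact ⟨by exact_mod_cast Nat.pow_log_le_self 2 (hf g hgG),
        by exact_mod_cast (Nat.lt_pow_succ_log_self one_lt_two _).le⟩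
    calc ∑ g ∈ G with Nat.log 2 (f g) = e, ((f g : ℝ) ^ 2)⁻¹
        ≤ ∑ g ∈ G with Nat.log 2 (f g) = e, (((2 : ℝ) ^ e) ^ 2)⁻¹ := by
          refine Finset.sum_le_sum fun g hg ↦ ?_
          have := (hlog g hg).1
          gcongr
      _ = (G.filter (fun g ↦ Nat.log 2 (f g) = e)).card * (((2 : ℝ) ^ e) ^ 2)⁻¹ := by
          rw [Finset.sum_const, nsmul_eq_mul]
      _ ≤ C * 2 ^ (e + 1) * (((2 : ℝ) ^ e) ^ 2)⁻¹ := by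
          gcongr
          exact hcount _ (one_le_pow₀ one_le_two) _ (Finset.filter_subset _ _)
            fun g hg ↦ (hlog g hg).2
      _ = 2 * C * (1 / 2) ^ e := by
          rw [pow_succ, one_div_pow]
          field_simp
  calc ∑ g ∈ G, ((f g : ℝ) ^ 2)⁻¹
      ≤ ∑ e ∈ Finset.range (G.sup (fun g ↦ Nat.log 2 (f g)) + 1), 2 * C * (1 / 2) ^ e := by
        rw [← Finset.sum_fiberwise_of_maps_to hE]
        exact Finset.sum_le_sum fun e _ ↦ hfiber e
    _ ≤ 2 * C * (1 - 1 / 2)⁻¹ := by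
        rw [← Finset.mul_sum]
        gcongr
        exact sum_range_pow_le_inv_one_sub (by norm_num) (by norm_num) _
    _ = 4 * C := by ring

variable (k : Type*) [Field k] [NumberField k]

theorem exists_card_ideals_le : ∃ C : ℝ, 0 < C ∧ ∀ Y : ℝ, 1 ≤ Y → ∀ G : Finset (Ideal (𝓞 k)),
    (∀ g ∈ G, g ≠ ⊥) → (∀ g ∈ G, (g.absNorm : ℝ) ≤ Y) → (G.card : ℝ) ≤ C * Y := by
  obtain ⟨Y₀, hY₀⟩ := Filter.eventually_atTop.1
    ((NumberField.Ideal.tendsto_norm_le_div_atTop₀ k).eventually_le_const (lt_add_one _))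
  set L := _ + (1 : ℝ)
  refine ⟨max L 1 * max Y₀ 1, by positivity, fun Y hY G hG0 hG ↦ ?_⟩
  have hY' : Y ≤ max Y₀ 1 * Y := le_mul_of_one_le_left (by linarith) (le_max_right _ _)
  have hcount := hY₀ (max Y₀ 1 * Y)
    ((le_max_left _ _).trans (le_mul_of_one_le_right (by positivity) hY))
  rw [div_le_iff₀ (by positivity)] at hcount
  have : Finite {I : nonZeroDivisors (Ideal (𝓞 k)) //
      ((I : Ideal (𝓞 k)).absNorm : ℝ) ≤ max Y₀ 1 * Y} :=
    ((Ideal.finite_setOfPred_absNorm_le₀ (S := 𝓞 k) ⌊max Y₀ 1 * Y⌋₊).subset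
      fun I hI ↦ Nat.le_floor hI).to_subtype
  have hle : G.card ≤ Nat.card {I : nonZeroDivisors (Ideal (𝓞 k)) //
      ((I : Ideal (𝓞 k)).absNorm : ℝ) ≤ max Y₀ 1 * Y} := by
    rw [show G.card = Nat.card G by simp]
    refine Nat.card_le_card_of_injective
      (fun g : G ↦ ⟨⟨g.1, mem_nonZeroDivisors_of_ne_zero (hG0 g.1 g.2)⟩, (hG g.1 g.2).trans hY'⟩)
      fun a b hab ↦ Subtype.ext (congrArg (fun I ↦ (I.1 : Ideal (𝓞 k))) hab)
  calc (G.card : ℝ) ≤ L * (max Y₀ 1 * Y) := (by exact_mod_cast hle : (G.card : ℝ) ≤ _).trans hcount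
    _ ≤ max L 1 * (max Y₀ 1 * Y) := by gcongr; exact le_max_left _ _
    _ = max L 1 * max Y₀ 1 * Y := by ring

theorem rpow_one_sub_inv_pow {Y : ℝ} (hY : 0 ≤ Y) {n : ℕ} (hn : n ≠ 0) :
    (Y ^ (1 - (n : ℝ)⁻¹)) ^ n = Y ^ (n - 1) := by
  rw [← Real.rpow_mul_natCast hY, ← Real.rpow_natCast, Nat.cast_pred (Nat.pos_of_ne_zero hn),
    sub_mul, one_mul, inv_mul_cancel₀ (Nat.cast_ne_zero.2 hn)]

theorem mul_one_add_div_pow_le {C Y N : ℝ} (hC : 0 ≤ C) (hY : 0 ≤ Y) (hN : 1 ≤ N) {n : ℕ}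
    (hn : 3 ≤ n) :
    N * (1 + C * Y ^ (1 - (n : ℝ)⁻¹) / N) ^ n ≤
      2 ^ (n - 1) * (N + C ^ n * Y ^ (n - 1) * (N ^ 2)⁻¹) := by
  have : 0 < N := by linarith
  have hpow : N ^ 3 ≤ N ^ n := pow_le_pow_right₀ hN hn
  calc N * (1 + C * Y ^ (1 - (n : ℝ)⁻¹) / N) ^ n
      ≤ N * (2 ^ (n - 1) * (1 ^ n + (C * Y ^ (1 - (n : ℝ)⁻¹) / N) ^ n)) := by
        gcongr
        exact add_pow_le zero_le_one (by positivity) n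
    _ = 2 ^ (n - 1) * (N + C ^ n * Y ^ (n - 1) * (N / N ^ n)) := by
        rw [one_pow, div_pow, mul_pow, rpow_one_sub_inv_pow hY (by omega)]
        ring
    _ ≤ 2 ^ (n - 1) * (N + C ^ n * Y ^ (n - 1) * (N ^ 2)⁻¹) := by
        gcongr
        rw [div_le_iff₀ (by positivity), inv_mul_eq_div, le_div_iff₀ (by positivity), ← pow_succ']
        exact hpow

theorem exists_sum_absNorm_mul_le {n : ℕ} (hn : 3 ≤ n) {C : ℝ} (hC : 0 ≤ C) :
    ∃ D : ℝ, 0 < D ∧ ∀ Y : ℝ, 1 ≤ Y → ∀ G : Finset (Ideal (𝓞 k)), (∀ g ∈ G, g ≠ ⊥) →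
      (∀ g ∈ G, (g.absNorm : ℝ) ≤ Y) →
      ∑ g ∈ G, (g.absNorm : ℝ) * (1 + C * Y ^ (1 - (n : ℝ)⁻¹) / g.absNorm) ^ n ≤
        D * Y ^ (n - 1) := by
  obtain ⟨A, hA, hcount⟩ := exists_card_ideals_le k
  refine ⟨2 ^ (n - 1) * (A + C ^ n * (4 * A)), by positivity, fun Y hY G hG0 hG ↦ ?_⟩
  have hpos (g) (hg : g ∈ G) : g.absNorm ≠ 0 := mt Ideal.absNorm_eq_zero_iff.1 (hG0 g hg)
  have hnorms : ∑ g ∈ G, (g.absNorm : ℝ) ≤ A * Y ^ (n - 1) :=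
    calc ∑ g ∈ G, (g.absNorm : ℝ) ≤ G.card * Y := by
          rw [← nsmul_eq_mul]
          exact Finset.sum_le_card_nsmul _ _ _ hG
      _ ≤ A * Y * Y := by gcongr; exact hcount Y hY G hG0 hG
      _ = A * Y ^ 2 := by ring
      _ ≤ A * Y ^ (n - 1) := by gcongr; omega
  have hinv : ∑ g ∈ G, ((g.absNorm : ℝ) ^ 2)⁻¹ ≤ 4 * A :=
    sum_inv_sq_le_of_card_le hpos fun Z hZ T hT hTZ ↦ hcount Z hZ T (fun g hg ↦ hG0 g (hT hg)) hTZ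
  calc ∑ g ∈ G, (g.absNorm : ℝ) * (1 + C * Y ^ (1 - (n : ℝ)⁻¹) / g.absNorm) ^ n
      ≤ ∑ g ∈ G, 2 ^ (n - 1) *
          ((g.absNorm : ℝ) + C ^ n * Y ^ (n - 1) * ((g.absNorm : ℝ) ^ 2)⁻¹) :=
        Finset.sum_le_sum fun g hg ↦ mul_one_add_div_pow_le hC (by linarith)
          (by exact_mod_cast Nat.one_le_iff_ne_zero.2 (hpos g hg)) hn
    _ = 2 ^ (n - 1) * (∑ g ∈ G, (g.absNorm : ℝ) +
          C ^ n * Y ^ (n - 1) * ∑ g ∈ G, ((g.absNorm : ℝ) ^ 2)⁻¹) := by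
        rw [← Finset.mul_sum, Finset.sum_add_distrib, Finset.mul_sum]
    _ ≤ 2 ^ (n - 1) * (A * Y ^ (n - 1) + C ^ n * Y ^ (n - 1) * (4 * A)) := by gcongr
    _ = 2 ^ (n - 1) * (A + C ^ n * (4 * A)) * Y ^ (n - 1) := by ring

end IdealSums

section Energy

variable {k : Type*} [Field k] [NumberField k] {ι : Type*} [Fintype ι]

/-- Spreading the largest norm evenly over all coordinates makes the bound a product, so that its
sum over `m` factors. -/
theorem inv_absNorm_le_prod_normWeight [Nonempty ι] {m : ι → 𝓞 k} {i₀ : ι} (h0 : m i₀ ≠ 0)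
    (hmax : ∀ i, (Ideal.span {m i}).absNorm ≤ (Ideal.span {m i₀}).absNorm) :
    ((Ideal.span {m i₀}).absNorm : ℝ)⁻¹ ≤ ∏ i, normWeight (Fintype.card ι : ℝ)⁻¹ (m i) := by
  have hN := one_le_absNorm_span_singleton h0
  have hN0 : (0 : ℝ) < (Ideal.span {m i₀}).absNorm := by linarith
  have hcard : (Fintype.card ι : ℝ) ≠ 0 := Nat.cast_ne_zero.2 Fintype.card_ne_zero
  calc ((Ideal.span {m i₀}).absNorm : ℝ)⁻¹
      = ∏ _i : ι, ((Ideal.span {m i₀}).absNorm : ℝ) ^ (-(Fintype.card ι : ℝ)⁻¹) := by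
        rw [Finset.prod_const, Finset.card_univ, ← Real.rpow_mul_natCast hN0.le, neg_mul,
          inv_mul_cancel₀ hcard, Real.rpow_neg_one]
    _ ≤ ∏ i, normWeight (Fintype.card ι : ℝ)⁻¹ (m i) := by
        refine Finset.prod_le_prod (fun _ _ ↦ by positivity) fun i _ ↦ ?_
        refine Real.rpow_le_rpow_of_nonpos (by positivity) (max_le hN ?_) (by simp)
        exact_mod_cast hmax i

variable (k ι) in
theorem exists_card_ker_le_prod_normWeight : ∃ C : ℝ, 0 < C ∧ ∀ X : ℝ, 1 ≤ X →
    ∀ m ∈ houseCube k ι X, m ≠ 0 → ∀ S ⊆ houseCube k ι X, (∀ κ ∈ S, m ⬝ᵥ κ = 0) →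
      (S.card : ℝ) ≤ C * (X ^ Module.finrank ℚ k) ^ (Fintype.card ι - 1) *
        (Ideal.span (Set.range m)).absNorm * ∏ i, normWeight (Fintype.card ι : ℝ)⁻¹ (m i) := by
  obtain ⟨C, hC, hker⟩ := exists_card_ker_le k ι
  refine ⟨C, hC, fun X hX m hm hm0 S hS hSm ↦ ?_⟩
  obtain ⟨i, hi⟩ := Function.ne_iff.1 hm0
  have : Nonempty ι := ⟨i⟩
  obtain ⟨i₀, hmax⟩ := Finite.exists_max fun i ↦ (Ideal.span {m i}).absNorm
  have h0 : m i₀ ≠ 0 := by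
    intro h
    have := absNorm_span_singleton_pos hi
    have := hmax i
    simp only [h, Ideal.span_singleton_zero, Ideal.absNorm_bot] at this
    simp_all
  refine (hker X hX m hm i₀ h0 S hS hSm).trans ?_
  rw [div_eq_mul_inv]
  gcongr
  exact inv_absNorm_le_prod_normWeight h0 hmax

theorem absNorm_span_range_le_pow {m : ι → 𝓞 k} {X : ℝ} (hm : m ∈ houseCube k ι X) (hm0 : m ≠ 0) :
    ((Ideal.span (Set.range m)).absNorm : ℝ) ≤ X ^ Module.finrank ℚ k := by
  obtain ⟨i, hi⟩ := Function.ne_iff.1 hm0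
  exact (absNorm_le_absNorm_span_singleton (Ideal.subset_span (Set.mem_range_self i)) hi).trans
    (absNorm_span_singleton_le_pow (mem_houseBall.2 (mem_houseCube.1 hm i)))

theorem sum_prod_normWeight_le {X C s : ℝ} {J : Ideal (𝓞 k)} {M : Finset (ι → 𝓞 k)}
    (hM : M ⊆ houseCube k ι X) (hJ : ∀ m ∈ M, ∀ i, m i ∈ J)
    (hC : ∀ S ⊆ houseBall k X, (∀ x ∈ S, x ∈ J) → ∑ x ∈ S, normWeight s x ≤ C) :
    ∑ m ∈ M, ∏ i, normWeight s (m i) ≤ C ^ Fintype.card ι := by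
  classical
  set T := (houseBall k X).filter (· ∈ J)
  calc ∑ m ∈ M, ∏ i, normWeight s (m i)
      ≤ ∑ m ∈ Fintype.piFinset fun _ : ι ↦ T, ∏ i, normWeight s (m i) := by
        refine Finset.sum_le_sum_of_subset_of_nonneg (fun m hm ↦ ?_)
          fun m _ _ ↦ Finset.prod_nonneg fun i _ ↦ (normWeight_pos s _).le
        exact Fintype.mem_piFinset.2 fun i ↦ Finset.mem_filter.2
          ⟨mem_houseBall.2 (mem_houseCube.1 (hM hm) i), hJ m hm i⟩
    _ = (∑ x ∈ T, normWeight s x) ^ Fintype.card ι := by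
        rw [← Finset.prod_univ_sum, Finset.prod_const, Finset.card_univ]
    _ ≤ C ^ Fintype.card ι :=
        pow_le_pow_left₀ (Finset.sum_nonneg fun x _ ↦ (normWeight_pos s x).le)
          (hC T (Finset.filter_subset _ _) fun x hx ↦ (Finset.mem_filter.1 hx).2) _

variable (k) in
theorem exists_sum_absNorm_mul_prod_normWeight_le (hι : 3 ≤ Fintype.card ι) :
    ∃ C : ℝ, 0 < C ∧ ∀ X : ℝ, 1 ≤ X → ∀ M ⊆ houseCube k ι X, 0 ∉ M →
      ∑ m ∈ M, (Ideal.span (Set.range m)).absNorm *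
          ∏ i, normWeight (Fintype.card ι : ℝ)⁻¹ (m i) ≤
        C * (X ^ Module.finrank ℚ k) ^ (Fintype.card ι - 1) := by
  classical
  have hs : (Fintype.card ι : ℝ)⁻¹ < 1 := inv_lt_one_of_one_lt₀ (by exact_mod_cast (by omega))
  obtain ⟨A, hA, hweight⟩ := exists_sum_normWeight_le (k := k) (by positivity) hs
  obtain ⟨D, hD, hideal⟩ := exists_sum_absNorm_mul_le k hι hA.le
  refine ⟨D, hD, fun X hX M hM hM0 ↦ ?_⟩
  let content (m : ι → 𝓞 k) : Ideal (𝓞 k) := Ideal.span (Set.range m)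
  have hne (m) (hm : m ∈ M) : m ≠ 0 := fun h ↦ hM0 (h ▸ hm)
  have hbot (g) (hg : g ∈ M.image content) : g ≠ ⊥ := by
    obtain ⟨m, hm, rfl⟩ := Finset.mem_image.1 hg
    obtain ⟨i, hi⟩ := Function.ne_iff.1 (hne m hm)
    exact fun h ↦ hi (Ideal.mem_bot.1 (h ▸ Ideal.subset_span (Set.mem_range_self i)))
  have hle (g) (hg : g ∈ M.image content) : (g.absNorm : ℝ) ≤ X ^ Module.finrank ℚ k := by
    obtain ⟨m, hm, rfl⟩ := Finset.mem_image.1 hg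
    exact absNorm_span_range_le_pow (hM hm) (hne m hm)
  rw [← Finset.sum_fiberwise_of_maps_to fun m hm ↦ Finset.mem_image_of_mem content hm]
  refine (Finset.sum_le_sum fun g hg ↦ ?_).trans (hideal _ (one_le_pow₀ hX) _ hbot hle)
  calc ∑ m ∈ M with content m = g, ((content m).absNorm : ℝ) *
        ∏ i, normWeight (Fintype.card ι : ℝ)⁻¹ (m i)
      = g.absNorm * ∑ m ∈ M with content m = g,
          ∏ i, normWeight (Fintype.card ι : ℝ)⁻¹ (m i) := by
        rw [Finset.mul_sum]
        exact Finset.sum_congr rfl fun m hm ↦ by rw [(Finset.mem_filter.1 hm).2]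
    _ ≤ _ := by
        refine mul_le_mul_of_nonneg_left ?_ (Nat.cast_nonneg _)
        refine sum_prod_normWeight_le ((Finset.filter_subset _ _).trans hM) (J := g) ?_
          (hweight X (by linarith) g (hbot g hg))
        intro m hm i
        exact (Finset.mem_filter.1 hm).2 ▸ Ideal.subset_span (Set.mem_range_self i)

variable (k ι) in
theorem exists_card_houseCube_le : ∃ C : ℝ, 0 < C ∧ ∀ X : ℝ, 1 ≤ X →
    ((houseCube k ι X).card : ℝ) ≤ C * (X ^ Module.finrank ℚ k) ^ Fintype.card ι := by
  refine ⟨(2 * 9 ^ Module.finrank ℚ k) ^ Fintype.card ι, by positivity, fun X hX ↦ ?_⟩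
  rw [card_houseCube, ← mul_pow, Nat.cast_pow]
  gcongr
  exact card_houseBall_le hX

theorem card_le_card_add_sum_erase {α β : Type*} [DecidableEq α] [DecidableEq β] {A : Finset α}
    {B : Finset β} {S : Finset (α × β)} (hS : S ⊆ A ×ˢ B) (a₀ : α) :
    S.card ≤ B.card + ∑ a ∈ A.erase a₀, (B.filter fun b ↦ (a, b) ∈ S).card := by
  have hfiber (a) : (S.filter fun p ↦ p.1 = a).card = (B.filter fun b ↦ (a, b) ∈ S).card := by
    refine Finset.card_nbij' Prod.snd (Prod.mk a) ?_ ?_ ?_ ?_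
    · rintro ⟨a, b⟩ hp
      obtain ⟨hpS, rfl⟩ := Finset.mem_filter.1 hp
      exact Finset.mem_filter.2 ⟨(Finset.mem_product.1 (hS hpS)).2, hpS⟩
    · exact fun b hb ↦ Finset.mem_filter.2 ⟨(Finset.mem_filter.1 hb).2, rfl⟩
    · rintro ⟨a, b⟩ hp
      rw [← (Finset.mem_filter.1 hp).2]
    · exact fun _ _ ↦ rfl
  have hmaps (p) (hp : p ∈ S) : p.1 ∈ insert a₀ (A.erase a₀) :=
    Finset.insert_erase_subset a₀ A (Finset.mem_product.1 (hS hp)).1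
  rw [Finset.card_eq_sum_card_fiberwise hmaps, Finset.sum_insert (Finset.notMem_erase _ _),
    Finset.sum_congr rfl fun a _ ↦ hfiber a, hfiber]
  gcongr
  exact Finset.filter_subset _ _

variable (k) in
theorem exists_card_orthogonal_pairs_le (hι : 3 ≤ Fintype.card ι) : ∃ C : ℝ, 0 < C ∧
    ∀ X : ℝ, 1 ≤ X → ∀ S ⊆ houseCube k ι X ×ˢ houseCube k ι X, (∀ p ∈ S, p.1 ⬝ᵥ p.2 = 0) →
      (S.card : ℝ) ≤ C * (X ^ Module.finrank ℚ k) ^ (2 * (Fintype.card ι - 1)) := by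
  classical
  obtain ⟨C₀, hC₀, hcube⟩ := exists_card_houseCube_le k ι
  obtain ⟨C₁, hC₁, hker⟩ := exists_card_ker_le_prod_normWeight k ι
  obtain ⟨C₂, hC₂, hsum⟩ := exists_sum_absNorm_mul_prod_normWeight_le k hι
  refine ⟨C₀ + C₁ * C₂, by positivity, fun X hX S hS hS0 ↦ ?_⟩
  set V := X ^ Module.finrank ℚ k
  have hV : 1 ≤ V := one_le_pow₀ hX
  have hzero : (houseCube k ι X).card ≤ C₀ * V ^ (2 * (Fintype.card ι - 1)) := by
    refine (hcube X hX).trans ?_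
    gcongr
    omega
  have hcard := card_le_card_add_sum_erase hS 0
  calc (S.card : ℝ) ≤ (houseCube k ι X).card +
        ∑ m ∈ (houseCube k ι X).erase 0,
          (((houseCube k ι X).filter fun κ ↦ (m, κ) ∈ S).card : ℝ) := by
        exact_mod_cast hcard
    _ ≤ C₀ * V ^ (2 * (Fintype.card ι - 1)) + ∑ m ∈ (houseCube k ι X).erase 0,
          C₁ * V ^ (Fintype.card ι - 1) * (((Ideal.span (Set.range m)).absNorm : ℝ) *
            ∏ i, normWeight (Fintype.card ι : ℝ)⁻¹ (m i)) := by
        gcongr with m hm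
        rw [← mul_assoc]
        obtain ⟨hm0, hm⟩ := Finset.mem_erase.1 hm
        exact hker X hX m hm hm0 _ (Finset.filter_subset _ _)
          fun κ hκ ↦ hS0 _ (Finset.mem_filter.1 hκ).2
    _ ≤ C₀ * V ^ (2 * (Fintype.card ι - 1)) +
          C₁ * V ^ (Fintype.card ι - 1) * (C₂ * V ^ (Fintype.card ι - 1)) := by
        rw [← Finset.mul_sum]
        gcongr
        exact hsum X hX _ (Finset.erase_subset _ _) (Finset.notMem_erase _ _)
    _ = (C₀ + C₁ * C₂) * V ^ (2 * (Fintype.card ι - 1)) := by rw [two_mul, pow_add]; ring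

end Energy

section DiagonalForm

theorem card_sq_le_card_image_mul {α β : Type*} [DecidableEq β] (U : Finset α) (F : α → β) :
    U.card ^ 2 ≤ (U.image F).card * ((U ×ˢ U).filter fun p ↦ F p.1 = F p.2).card := by
  classical
  have hpairs : ((U ×ˢ U).filter fun p ↦ F p.1 = F p.2).card =
      ∑ y ∈ U.image F, (U.filter fun u ↦ F u = y).card ^ 2 := by
    rw [Finset.card_eq_sum_card_fiberwise (f := fun p ↦ F p.1) (t := U.image F) fun p hp ↦
      Finset.mem_image_of_mem F (Finset.mem_product.1 (Finset.mem_filter.1 hp).1).1]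
    refine Finset.sum_congr rfl fun y _ ↦ ?_
    rw [sq, ← Finset.card_product]
    congr 1
    ext p
    simp only [Finset.mem_filter, Finset.mem_product]
    grind
  rw [Finset.card_eq_sum_card_image F U, hpairs]
  exact sq_sum_le_card_mul_sum_sq

theorem exists_popular_sum {α G : Type*} [Add G] [IsLeftCancelAdd G] (f : α → G) {A : Finset α}
    {S B : Finset G} {b : ℝ} (hB : B.Nonempty) (hmaps : ∀ a ∈ A, ∀ s ∈ S, f a + s ∈ B)
    (hcard : B.card * b ≤ A.card * S.card) :
    ∃ n ∈ B, ∃ A' ⊆ A, b ≤ A'.card ∧ ∀ a ∈ A', ∃ s ∈ S, f a + s = n := by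
  classical
  obtain ⟨n, hn, hfib⟩ := Finset.exists_le_card_fiber_of_nsmul_le_card_of_maps_to
    (s := A ×ˢ S) (f := fun q ↦ f q.1 + q.2) (b := b)
    (fun q hq ↦ hmaps _ (Finset.mem_product.1 hq).1 _ (Finset.mem_product.1 hq).2) hB
    (by simpa using hcard)
  refine ⟨n, hn, ((A ×ˢ S).filter fun q ↦ f q.1 + q.2 = n).image Prod.fst, ?_, ?_, ?_⟩
  · exact Finset.image_subset_iff.2 fun q hq ↦ (Finset.mem_product.1 (Finset.mem_filter.1 hq).1).1
  · rwa [Finset.card_image_of_injOn]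
    rintro ⟨a, s⟩ hq ⟨a', s'⟩ hq' (rfl : a = a')
    have := (Finset.mem_filter.1 hq).2.trans (Finset.mem_filter.1 hq').2.symm
    exact Prod.ext rfl (add_left_cancel this)
  · simp only [Finset.mem_image, Finset.mem_filter, Finset.mem_product]
    rintro a ⟨q, ⟨⟨-, hq⟩, hqn⟩, rfl⟩
    exact ⟨q.2, hq, hqn⟩

/-- Polarisation: it turns a coincidence `∑ cᵢ uᵢ² = ∑ cᵢ u'ᵢ²` into the bilinear equation
`∑ (uᵢ + u'ᵢ) (cᵢ (uᵢ - u'ᵢ)) = 0`. -/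
def polarPair {R ι : Type*} [CommRing R] (c : ι → R) (p : (ι → R) × (ι → R)) :
    (ι → R) × (ι → R) :=
  (p.1 + p.2, c * (p.1 - p.2))

theorem polarPair_injective {R ι : Type*} [CommRing R] [IsDomain R] (h2 : (2 : R) ≠ 0) {c : ι → R}
    (hc : ∀ i, c i ≠ 0) : Function.Injective (polarPair c) := by
  rintro ⟨u, u'⟩ ⟨w, w'⟩ h
  obtain ⟨hadd, hmul⟩ := Prod.mk.inj h
  have hadd (i) : u i + u' i = w i + w' i := congrFun hadd i
  have hsub (i) : u i - u' i = w i - w' i := mul_left_cancel₀ (hc i) (congrFun hmul i)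
  refine Prod.ext (funext fun i ↦ mul_left_cancel₀ h2 ?_) (funext fun i ↦ mul_left_cancel₀ h2 ?_)
  · linear_combination hadd i + hsub i
  · linear_combination hadd i - hsub i

theorem dotProduct_polarPair_eq_zero_iff {R ι : Type*} [CommRing R] [Fintype ι] {c : ι → R}
    {p : (ι → R) × (ι → R)} : (polarPair c p).1 ⬝ᵥ (polarPair c p).2 = 0 ↔
      ∑ i, c i * p.1 i ^ 2 = ∑ i, c i * p.2 i ^ 2 := by
  rw [← sub_eq_zero (a := ∑ i, c i * p.1 i ^ 2), ← Finset.sum_sub_distrib]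
  refine Eq.congr (Finset.sum_congr rfl fun i _ ↦ ?_) rfl
  simp only [polarPair, Pi.add_apply, Pi.mul_apply, Pi.sub_apply]
  ring

variable {k : Type*} [Field k] [NumberField k] {ι : Type*} [Fintype ι]

theorem house_sum_mul_sq_le {X : ℝ} (c : ι → 𝓞 k) {u : ι → 𝓞 k} (hu : u ∈ houseCube k ι X) :
    house ((∑ i, c i * u i ^ 2 : 𝓞 k) : k) ≤ X ^ 2 * ∑ i, house (c i : k) := by
  simp only [map_sum, map_mul, map_pow, mul_comm ((c _ : 𝓞 k) : k)]
  refine house_sum_mul_le _ _ fun i ↦ ?_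
  rw [sq, sq]
  have hi := mem_houseCube.1 hu i
  exact (house_mul_le _ _).trans (mul_self_le_mul_self (house_nonneg _) hi)

theorem sq_add_sum_mul_sq_mem_houseBall {X : ℝ} {a : 𝓞 k} (ha : a ∈ houseBall k X)
    (c : ι → 𝓞 k) {u : ι → 𝓞 k} (hu : u ∈ houseCube k ι X) :
    a ^ 2 + ∑ i, c i * u i ^ 2 ∈ houseBall k ((1 + ∑ i, house (c i : k)) * X ^ 2) := by
  rw [mem_houseBall] at ha ⊢
  calc house ((a ^ 2 + ∑ i, c i * u i ^ 2 : 𝓞 k) : k)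
      ≤ house (a : k) ^ 2 + house ((∑ i, c i * u i ^ 2 : 𝓞 k) : k) := by
        simp only [map_add, sq]
        exact (house_add_le _ _).trans (add_le_add_left (house_mul_le _ _) _)
    _ ≤ X ^ 2 + X ^ 2 * ∑ i, house (c i : k) := by
        gcongr
        · exact house_nonneg _
        · exact house_sum_mul_sq_le c hu
    _ = (1 + ∑ i, house (c i : k)) * X ^ 2 := by ring

theorem polarPair_mem_houseCube {c : ι → 𝓞 k} {X : ℝ} (hX : 0 ≤ X) {p : (ι → 𝓞 k) × (ι → 𝓞 k)}
    (hp : p ∈ houseCube k ι X ×ˢ houseCube k ι X) :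
    polarPair c p ∈ houseCube k ι (2 * (1 + ∑ i, house (c i : k)) * X) ×ˢ
      houseCube k ι (2 * (1 + ∑ i, house (c i : k)) * X) := by
  obtain ⟨hu, hu'⟩ := Finset.mem_product.1 hp
  rw [mem_houseCube] at hu hu'
  have hsum : 0 ≤ ∑ i, house (c i : k) := Finset.sum_nonneg fun i _ ↦ house_nonneg _
  refine Finset.mem_product.2 ⟨mem_houseCube.2 fun i ↦ ?_, mem_houseCube.2 fun i ↦ ?_⟩
  · calc house ((p.1 i + p.2 i : 𝓞 k) : k) ≤ house (p.1 i : k) + house (p.2 i : k) := by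
          simpa using house_add_le (p.1 i : k) (p.2 i)
      _ ≤ X + X := add_le_add (hu i) (hu' i)
      _ ≤ 2 * (1 + ∑ i, house (c i : k)) * X := by nlinarith
  · have hci : house (c i : k) ≤ ∑ i, house (c i : k) :=
      Finset.single_le_sum (f := fun i ↦ house (c i : k)) (fun i _ ↦ house_nonneg _)
        (Finset.mem_univ i)
    calc house ((c i * (p.1 i - p.2 i) : 𝓞 k) : k)
        ≤ house (c i : k) * (house (p.1 i : k) + house (p.2 i : k)) := by
          simp only [map_mul, map_sub]
          refine (house_mul_le _ _).trans ?_
          gcongr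
          exacts [house_nonneg _, house_sub_le _ _]
      _ ≤ (∑ i, house (c i : k)) * (X + X) := by
          gcongr
          exacts [add_nonneg (house_nonneg _) (house_nonneg _), hu i, hu' i]
      _ ≤ 2 * (1 + ∑ i, house (c i : k)) * X := by nlinarith

open scoped Classical in
theorem exists_card_collisions_le (hι : 3 ≤ Fintype.card ι) {c : ι → 𝓞 k} (hc : ∀ i, c i ≠ 0) :
    ∃ C : ℝ, 0 < C ∧ ∀ X : ℝ, 1 ≤ X →
      (((houseCube k ι X ×ˢ houseCube k ι X).filter fun p ↦
        ∑ i, c i * p.1 i ^ 2 = ∑ i, c i * p.2 i ^ 2).card : ℝ) ≤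
        C * (X ^ Module.finrank ℚ k) ^ (2 * (Fintype.card ι - 1)) := by
  obtain ⟨C, hC, horth⟩ := exists_card_orthogonal_pairs_le k hι
  have hsum : 0 ≤ ∑ i, house (c i : k) := Finset.sum_nonneg fun i _ ↦ house_nonneg _
  set W := 2 * (1 + ∑ i, house (c i : k))
  have hW : 1 ≤ W := by simp only [W]; linarith
  refine ⟨C * (W ^ Module.finrank ℚ k) ^ (2 * (Fintype.card ι - 1)), by positivity, fun X hX ↦ ?_⟩
  rw [← Finset.card_image_of_injective _ (polarPair_injective two_ne_zero hc), mul_assoc,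
    ← mul_pow, ← mul_pow]
  refine horth (W * X) (one_le_mul_of_one_le_of_one_le hW hX) _ ?_ ?_
  · exact Finset.image_subset_iff.2 fun p hp ↦
      polarPair_mem_houseCube (by linarith) (Finset.mem_filter.1 hp).1
  · simp only [Finset.mem_image, Finset.mem_filter]
    rintro _ ⟨p, hp, rfl⟩
    exact dotProduct_polarPair_eq_zero_iff.2 hp.2

open scoped Classical in
theorem exists_le_card_image_sum_mul_sq (hι : 3 ≤ Fintype.card ι) {c : ι → 𝓞 k}
    (hc : ∀ i, c i ≠ 0) : ∃ δ : ℝ, 0 < δ ∧ ∀ X : ℝ, 1 ≤ X →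
      δ * (X ^ Module.finrank ℚ k) ^ 2 ≤
        ((houseCube k ι X).image fun u ↦ ∑ i, c i * u i ^ 2).card := by
  obtain ⟨C, hC, hcoll⟩ := exists_card_collisions_le hι hc
  have hB : 0 < basisBound k := zero_lt_one.trans_le one_le_basisBound
  set N := Module.finrank ℚ k
  set n := Fintype.card ι
  refine ⟨((((basisBound k)⁻¹ ^ N) ^ n) ^ 2) / C, by positivity, fun X hX ↦ ?_⟩
  have hX0 : 0 < X := by linarith
  set F := fun u : ι → 𝓞 k ↦ ∑ i, c i * u i ^ 2
  have hCS : ((houseCube k ι X).card : ℝ) ^ 2 ≤ ((houseCube k ι X).image F).card *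
      ((houseCube k ι X ×ˢ houseCube k ι X).filter fun p ↦ F p.1 = F p.2).card := by
    exact_mod_cast card_sq_le_card_image_mul (houseCube k ι X) F
  have hcube : ((X / basisBound k) ^ N) ^ n ≤ (houseCube k ι X).card := by
    rw [card_houseCube, Nat.cast_pow]
    gcongr
    exact le_card_houseBall hX0.le
  have hV : ((X ^ N) ^ n) ^ 2 = (X ^ N) ^ 2 * (X ^ N) ^ (2 * (n - 1)) := by
    rw [← pow_mul, ← pow_add]
    congr 1
    omega
  rw [div_mul_eq_mul_div, div_le_iff₀ hC]
  refine le_of_mul_le_mul_right ?_ (show 0 < (X ^ N) ^ (2 * (n - 1)) by positivity)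
  calc (((basisBound k)⁻¹ ^ N) ^ n) ^ 2 * (X ^ N) ^ 2 * (X ^ N) ^ (2 * (n - 1))
      = (((X / basisBound k) ^ N) ^ n) ^ 2 := by
        rw [mul_assoc, ← hV, ← mul_pow, ← mul_pow, ← mul_pow, inv_mul_eq_div]
    _ ≤ ((houseCube k ι X).card : ℝ) ^ 2 := by gcongr
    _ ≤ _ := hCS.trans (mul_le_mul_of_nonneg_left (hcoll X hX) (Nat.cast_nonneg _))
    _ = _ := by ring

theorem exists_popular_value (hι : 3 ≤ Fintype.card ι) {c : ι → 𝓞 k} (hc : ∀ i, c i ≠ 0) :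
    ∃ δ C : ℝ, 0 < δ ∧ 0 < C ∧ ∀ X : ℝ, 1 ≤ X → ∃ n : 𝓞 k, ∃ A ⊆ houseBall k X,
      house (n : k) ≤ C * X ^ 2 ∧ δ * X ^ Module.finrank ℚ k ≤ A.card ∧
        ∀ a ∈ A, ∃ u : ι → 𝓞 k, n = a ^ 2 + ∑ i, c i * u i ^ 2 := by
  classical
  obtain ⟨δ, hδ, himage⟩ := exists_le_card_image_sum_mul_sq hι hc
  have hB : 0 < basisBound k := zero_lt_one.trans_le one_le_basisBound
  have hsum : 0 ≤ ∑ i, house (c i : k) := Finset.sum_nonneg fun i _ ↦ house_nonneg _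
  set N := Module.finrank ℚ k
  set W := 1 + ∑ i, house (c i : k)
  have hW : 1 ≤ W := by simp only [W]; linarith
  refine ⟨(basisBound k)⁻¹ ^ N * δ / (2 * 9 ^ N * W ^ N), W, by positivity, by positivity,
    fun X hX ↦ ?_⟩
  have hX0 : 0 < X := by linarith
  set S := (houseCube k ι X).image fun u ↦ ∑ i, c i * u i ^ 2
  have hmaps : ∀ a ∈ houseBall k X, ∀ s ∈ S, a ^ 2 + s ∈ houseBall k (W * X ^ 2) := by
    simp only [S, Finset.mem_image, forall_exists_index, and_imp]
    rintro a ha s u hu rfl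
    exact sq_add_sum_mul_sq_mem_houseBall ha c hu
  have hcard : (houseBall k (W * X ^ 2)).card *
      ((basisBound k)⁻¹ ^ N * δ / (2 * 9 ^ N * W ^ N) * X ^ N) ≤ (houseBall k X).card * S.card :=
    calc _ ≤ 2 * 9 ^ N * (W * X ^ 2) ^ N *
            ((basisBound k)⁻¹ ^ N * δ / (2 * 9 ^ N * W ^ N) * X ^ N) := by
          gcongr
          exact card_houseBall_le (one_le_mul_of_one_le_of_one_le hW (one_le_pow₀ hX))
      _ = (X / basisBound k) ^ N * (δ * (X ^ N) ^ 2) := by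
          rw [mul_pow, div_pow, inv_pow]
          field_simp
          ring
      _ ≤ _ := by gcongr; exacts [le_card_houseBall hX0.le, himage X hX]
  obtain ⟨n, hn, A, hAX, hA, hrep⟩ := exists_popular_sum (fun a ↦ a ^ 2)
    ⟨0, mem_houseBall.2 (by simpa [house] using by positivity)⟩ hmaps hcard
  refine ⟨n, A, hAX, mem_houseBall.1 hn, hA, fun a ha ↦ ?_⟩
  obtain ⟨s, hs, rfl⟩ := hrep a ha
  obtain ⟨u, -, rfl⟩ := Finset.mem_image.1 hs
  exact ⟨u, rfl⟩

end DiagonalForm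

section Certificate

variable {R S ι κ : Type*} [CommRing R] [CommRing S] [Fintype ι] [Fintype κ]

/-- The set of `a` occurring as first coordinate in a representation of `n` by the diagonal form
`a ^ 2 + ∑ i, c i * u i ^ 2`. -/
def firstCoords (c : ι → R) (n : R) : Set R := {a | ∃ u : ι → R, n = a ^ 2 + ∑ i, c i * u i ^ 2}

/-- The set of `t` having a multiple `e * t`, with `1 ≤ e ≤ M`, that is a difference of two first
coordinates of `n`. This encodes, up to the factor `M !`, that `t` is small compared with `√n`. -/
def quotDiffs (c : ι → R) (M : ℕ) (n : R) : Set R :=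
  {t | ∃ e ∈ Finset.Icc 1 M, ∃ a ∈ firstCoords c n, ∃ a' ∈ firstCoords c n, (e : R) * t = a - a'}

/-- The combinations of the `ω i` whose coefficients are written with digits from `D`. If `D`
contains the integers up to `B`, the coefficients reach all integers up to order `B ^ 2`. -/
def digitSums (ω : κ → R) (K : ℕ) (D : Set R) : Set R :=
  {q | ∃ r r' s t : κ → R, (∀ i, r i ∈ D ∧ r' i ∈ D ∧ s i ∈ D ∧ t i ∈ D) ∧
    q = ∑ i, (K * (r i * r' i + s i) + t i) * ω i}

/-- The elements `n` that are congruent modulo `ϱ` to an element of `T`, the quotient being a digit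
sum with digits that are small compared with `√n` itself. For the forms used here, this is an
existential way to force `n` to be integral at a place dividing `ϱ`. -/
def certified (c : ι → R) (M : ℕ) (ω : κ → R) (K : ℕ) (ϱ : R) (T : Finset R) : Set R :=
  {n | 1 ∈ quotDiffs c M n ∧ ∃ x ∈ T, ∃ q ∈ digitSums ω K (quotDiffs c M n), n = x + ϱ * q}

/-- The elements that are small compared with the square root of a certified element. -/
def certifiedQuotDiffs (c : ι → R) (M : ℕ) (ω : κ → R) (K : ℕ) (ϱ : R) (T : Finset R) : Set R :=
  {z | ∃ n ∈ certified c M ω K ϱ T, z ∈ quotDiffs c M n}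

theorem map_mem_firstCoords (f : R →+* S) {c : ι → R} {n a : R} (ha : a ∈ firstCoords c n) :
    f a ∈ firstCoords (f ∘ c) (f n) := by
  obtain ⟨u, rfl⟩ := ha
  exact ⟨f ∘ u, by simp⟩

theorem map_mem_quotDiffs (f : R →+* S) {c : ι → R} {M : ℕ} {n t : R} (ht : t ∈ quotDiffs c M n) :
    f t ∈ quotDiffs (f ∘ c) M (f n) := by
  obtain ⟨e, he, a, ha, a', ha', h⟩ := ht
  exact ⟨e, he, f a, map_mem_firstCoords f ha, f a', map_mem_firstCoords f ha',
    by simpa using congrArg f h⟩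

theorem map_mem_digitSums (f : R →+* S) {ω : κ → R} {K : ℕ} {D : Set R} {D' : Set S}
    (hD : Set.MapsTo f D D') {q : R} (hq : q ∈ digitSums ω K D) : f q ∈ digitSums (f ∘ ω) K D' := by
  obtain ⟨r, r', s, t, h, rfl⟩ := hq
  exact ⟨f ∘ r, f ∘ r', f ∘ s, f ∘ t,
    fun i ↦ ⟨hD (h i).1, hD (h i).2.1, hD (h i).2.2.1, hD (h i).2.2.2⟩, by simp⟩

open Classical in
theorem map_mem_certifiedQuotDiffs (f : R →+* S) {c : ι → R} {M : ℕ} {ω : κ → R} {K : ℕ} {ϱ : R}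
    {T : Finset R} {z : R} (hz : z ∈ certifiedQuotDiffs c M ω K ϱ T) :
    f z ∈ certifiedQuotDiffs (f ∘ c) M (f ∘ ω) K (f ϱ) (T.image f) := by
  obtain ⟨n, ⟨h1, x, hx, q, hq, hn⟩, hz⟩ := hz
  refine ⟨f n, ⟨map_one f ▸ map_mem_quotDiffs f h1, f x, Finset.mem_image_of_mem f hx, f q,
    map_mem_digitSums f (fun t ht ↦ map_mem_quotDiffs f ht) hq, ?_⟩, map_mem_quotDiffs f hz⟩
  rw [hn, map_add, map_mul]

end Certificate

section CertifiedIntegers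

theorem exists_int_digits {q : ℤ} {K : ℕ} {B : ℝ} (hK : 0 < K) (hB : 0 ≤ B)
    (hq : |(q : ℝ)| ≤ K * B ^ 2) :
    ∃ r r' s t : ℤ, |(r : ℝ)| ≤ B ∧ |(r' : ℝ)| ≤ B ∧ |(s : ℝ)| ≤ 2 * B ∧ |(t : ℝ)| ≤ K ∧
      q = K * (r * r' + s) + t := by
  wlog h0 : 0 ≤ q generalizing q
  · obtain ⟨r, r', s, t, hr, hr', hs, ht, h⟩ :=
      this (q := -q) (by simpa using hq) (by omega)
    refine ⟨-r, r', -s, -t, ?_, hr', ?_, ?_, by linear_combination -h⟩ <;> simpa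
  lift q to ℕ using h0
  set b := q / K
  set r := b.sqrt
  have hrb : ((r * r : ℕ) : ℝ) ≤ b := by exact_mod_cast b.sqrt_le
  have hbr : (b : ℝ) ≤ (r * r + r + r : ℕ) := by exact_mod_cast b.sqrt_le_add
  have hbB : (b : ℝ) ≤ B ^ 2 := by
    have hK' : (0 : ℝ) < K := by exact_mod_cast hK
    have hq' : (q : ℝ) ≤ K * B ^ 2 := by simpa using hq
    exact Nat.cast_div_le.trans ((div_le_iff₀' hK').2 hq')
  have hrB : (r : ℝ) ≤ B := by
    refine le_of_sq_le_sq ?_ hB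
    push_cast at hrb
    linarith
  push_cast at hrb hbr
  refine ⟨r, r, b - r * r, (q % K : ℕ), by simpa, by simpa, ?_, ?_, ?_⟩
  · push_cast
    rw [abs_of_nonneg (by linarith)]
    linarith
  · rw [Int.cast_natCast, Nat.abs_cast]
    exact_mod_cast (Nat.mod_lt q hK).le
  · have hdiv : (q : ℤ) = K * b + (q % K : ℕ) := by exact_mod_cast (Nat.div_add_mod q K).symm
    linear_combination hdiv

variable {k : Type*} [Field k] [NumberField k]

variable (k) in
theorem exists_abs_basis_repr_le : ∃ C : ℝ, 0 < C ∧ ∀ (x : 𝓞 k) i,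
    |((RingOfIntegers.basis k).repr x i : ℝ)| ≤ C * house (x : k) := by
  classical
  obtain ⟨C, hC⟩ : ∃ C : ℝ, ∀ (x : 𝓞 k) (φ : k →+* ℂ),
      ‖(((integralBasis k).reindex (equivReindex k).symm).repr x φ : ℂ)‖ ≤ C * house (x : k) :=
    ⟨_, house.basis_repr_norm_le_const_mul_house k⟩
  refine ⟨max C 1, by positivity, fun x i ↦ ?_⟩
  have hi := hC x ((equivReindex k).symm i)
  simp only [Module.Basis.repr_reindex_apply, integralBasis_repr_apply, Equiv.symm_symm,
    Equiv.apply_symm_apply, eq_intCast, Rat.cast_intCast, Complex.norm_intCast] at hi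
  exact hi.trans (mul_le_mul_of_nonneg_right (le_max_left _ _) (house_nonneg _))

/-- The translates of `A` by `0, t, …, M * t` are too many to be disjoint. -/
theorem exists_multiple_eq_sub {A : Finset (𝓞 k)} {X : ℝ} {M : ℕ} {t : 𝓞 k}
    (hA : A ⊆ houseBall k X) (ht : M * house (t : k) ≤ X)
    (hcard : (houseBall k (2 * X)).card < (M + 1) * A.card) :
    ∃ e ∈ Finset.Icc 1 M, ∃ a ∈ A, ∃ a' ∈ A, (e : 𝓞 k) * t = a - a' := by
  classical
  have hmaps : ∀ p ∈ Finset.range (M + 1) ×ˢ A, p.2 + p.1 * t ∈ houseBall k (2 * X) := by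
    rintro ⟨i, a⟩ hp
    obtain ⟨hi, ha⟩ := Finset.mem_product.1 hp
    have hi' : (i : ℝ) ≤ M := by exact_mod_cast Nat.lt_succ_iff.1 (Finset.mem_range.1 hi)
    have hit : house ((i : k) * t) ≤ X := calc
      house ((i : k) * t) ≤ house ((i : ℤ) : k) * house (t : k) := by
        simpa using house_mul_le (i : k) t
      _ ≤ M * house (t : k) := by
        rw [house_intCast]
        simpa using mul_le_mul_of_nonneg_right hi' (house_nonneg _)
      _ ≤ X := ht
    have hcoe : ((a + i * t : 𝓞 k) : k) = a + i * t := by simp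
    rw [mem_houseBall, hcoe, two_mul]
    exact (house_add_le _ _).trans (add_le_add (mem_houseBall.1 (hA ha)) hit)
  obtain ⟨⟨i, a⟩, hp, ⟨j, b⟩, hp', hne, heq⟩ :=
    Finset.exists_ne_map_eq_of_card_lt_of_maps_to
      (by rwa [Finset.card_product, Finset.card_range]) hmaps
  simp only [Finset.mem_product, Finset.mem_range, Nat.lt_succ_iff] at hp hp' heq
  have hij : i ≠ j := by
    rintro rfl
    exact hne (by rw [add_right_cancel heq])
  wlog h : i < j generalizing i j a b
  · exact this j b i a hne.symm heq.symm hp' hp hij.symm (hij.lt_or_gt.resolve_left h)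
  refine ⟨j - i, Finset.mem_Icc.2 ⟨by omega, by omega⟩, a, hp.2, b, hp'.2, ?_⟩
  rw [Nat.cast_sub h.le]
  linear_combination -heq

theorem mem_quotDiffs_of_le_card {ι : Type*} [Fintype ι] {c : ι → 𝓞 k} {n : 𝓞 k} {A : Finset (𝓞 k)}
    {X δ : ℝ} {M : ℕ} {t : 𝓞 k} (hX : 1 ≤ X) (hδ : 0 < δ)
    (hM : 2 * 9 ^ Module.finrank ℚ k * 2 ^ Module.finrank ℚ k / δ ≤ M)
    (hA : A ⊆ houseBall k X) (hcard : δ * X ^ Module.finrank ℚ k ≤ A.card)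
    (hn : ∀ a ∈ A, a ∈ firstCoords c n) (ht : M * house (t : k) ≤ X) : t ∈ quotDiffs c M n := by
  have hlt : ((houseBall k (2 * X)).card : ℝ) < (M + 1) * A.card := by
    have hXN : 0 < X ^ Module.finrank ℚ k := by positivity
    have hMδ : 2 * 9 ^ Module.finrank ℚ k * 2 ^ Module.finrank ℚ k < (M + 1) * δ := by
      rw [div_le_iff₀ hδ] at hM
      linarith
    calc ((houseBall k (2 * X)).card : ℝ)
        ≤ 2 * 9 ^ Module.finrank ℚ k * (2 * X) ^ Module.finrank ℚ k :=
          card_houseBall_le (by linarith)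
      _ = 2 * 9 ^ Module.finrank ℚ k * 2 ^ Module.finrank ℚ k * X ^ Module.finrank ℚ k := by
        rw [mul_pow]
        ring
      _ < (M + 1) * δ * X ^ Module.finrank ℚ k := by gcongr
      _ ≤ (M + 1) * A.card := by
        rw [mul_assoc]
        gcongr
  obtain ⟨e, he, a, ha, a', ha', h⟩ := exists_multiple_eq_sub hA ht (by exact_mod_cast hlt)
  exact ⟨e, he, a, hn a ha, a', hn a' ha', h⟩

variable (k) in
theorem exists_mem_digitSums_basis : ∃ E : ℝ, 0 < E ∧ ∀ {D : Set (𝓞 k)} {K : ℕ} {B : ℝ}, 0 < K →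
    0 ≤ B → (∀ t : ℤ, |(t : ℝ)| ≤ max (2 * B) K → (t : 𝓞 k) ∈ D) →
    ∀ q : 𝓞 k, E * house (q : k) ≤ K * B ^ 2 → q ∈ digitSums (RingOfIntegers.basis k) K D := by
  obtain ⟨E, hE, hrepr⟩ := exists_abs_basis_repr_le k
  refine ⟨E, hE, fun {D K B} hK hB hD q hq ↦ ?_⟩
  choose r r' s t hr hr' hs ht heq using fun i ↦
    exists_int_digits hK hB ((hrepr q i).trans hq)
  have h2B : B ≤ max (2 * B) K := le_max_of_le_left (by linarith)
  refine ⟨(r ·), (r' ·), (s ·), (t ·), fun i ↦ ⟨hD _ ((hr i).trans h2B), hD _ ((hr' i).trans h2B),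
    hD _ ((hs i).trans (le_max_left _ _)), hD _ ((ht i).trans (le_max_right _ _))⟩, ?_⟩
  conv_lhs => rw [← (RingOfIntegers.basis k).sum_repr q]
  refine Finset.sum_congr rfl fun i _ ↦ ?_
  rw [heq i, zsmul_eq_mul]
  push_cast
  rfl

theorem house_le_of_eq_add_mul {n x ϱ q : 𝓞 k} (hϱ : ϱ ≠ 0) (h : n = x + ϱ * q) :
    house (q : k) ≤ house (ϱ : k)⁻¹ * (house (n : k) + house (x : k)) := by
  have hϱ' : (ϱ : k) ≠ 0 := RingOfIntegers.coe_ne_zero_iff.2 hϱ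
  have hq : (q : k) = (ϱ : k)⁻¹ * (n - x) := by
    rw [h]
    push_cast
    field_simp
    ring
  rw [hq]
  exact (house_mul_le _ _).trans
    (mul_le_mul_of_nonneg_left (house_sub_le _ _) (house_nonneg _))

theorem exists_forall_mem_certified {M : ℕ} (hM : 0 < M) {ϱ : 𝓞 k} (hϱ : ϱ ≠ 0) {T : Finset (𝓞 k)}
    (hT : ∀ n, ∃ x ∈ T, ϱ ∣ n - x) {C : ℝ} (hC : 0 ≤ C) :
    ∃ K : ℕ, ∀ {ι : Type*} [Fintype ι] {c : ι → 𝓞 k} {n : 𝓞 k} {X : ℝ}, 1 ≤ X → M * K ≤ X →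
      house (n : k) ≤ C * X ^ 2 → (∀ t : 𝓞 k, M * house (t : k) ≤ X → t ∈ quotDiffs c M n) →
      n ∈ certified c M (RingOfIntegers.basis k) K ϱ T := by
  obtain ⟨E, hE, hdigits⟩ := exists_mem_digitSums_basis k
  set H : ℝ := ∑ x ∈ T, house (x : k)
  have hH : 0 ≤ H := Finset.sum_nonneg fun x _ ↦ house_nonneg _
  set γ : ℝ := E * (house (ϱ : k)⁻¹ * (C + H))
  have hγ : 0 ≤ γ := mul_nonneg hE.le (mul_nonneg (house_nonneg _) (add_nonneg hC hH))
  obtain ⟨K, hK⟩ := exists_nat_gt (γ * (2 * M) ^ 2)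
  have hK0 : 0 < K := by exact_mod_cast (lt_of_le_of_lt (by positivity) hK : (0 : ℝ) < K)
  have hM' : (0 : ℝ) < M := by exact_mod_cast hM
  refine ⟨K, fun {ι _ c n X} hX hXK hn hsmall ↦ ?_⟩
  have hdigit (t : ℤ) (ht : |(t : ℝ)| ≤ max (2 * (X / (2 * M))) K) :
      (t : 𝓞 k) ∈ quotDiffs c M n := by
    have hcoe : ((t : 𝓞 k) : k) = (t : k) := by simp
    refine hsmall _ ?_
    rw [hcoe, house_intCast, ← le_div_iff₀' hM']
    push_cast
    refine ht.trans (max_le (by field_simp; rfl) ((le_div_iff₀' hM').2 hXK))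
  have hone : |((1 : ℤ) : ℝ)| ≤ max (2 * (X / (2 * M))) K := by
    refine le_max_of_le_right ?_
    rw [Int.cast_one, abs_one]
    exact_mod_cast hK0
  obtain ⟨x, hx, q, hq⟩ := hT n
  have hnq : n = x + ϱ * q := by rw [← hq]; ring
  refine ⟨by simpa using hdigit 1 hone, x, hx, q, hdigits hK0 (by positivity) hdigit q ?_, hnq⟩
  have hxX : house (x : k) ≤ H * X ^ 2 :=
    (Finset.single_le_sum (f := fun x : 𝓞 k ↦ house (x : k)) (fun x _ ↦ house_nonneg _) hx).trans
      (le_mul_of_one_le_right hH (one_le_pow₀ hX))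
  calc E * house (q : k) ≤ E * (house (ϱ : k)⁻¹ * (C * X ^ 2 + H * X ^ 2)) := by
        gcongr
        refine (house_le_of_eq_add_mul hϱ hnq).trans ?_
        have := house_nonneg (ϱ : k)⁻¹
        gcongr
    _ = γ * (2 * M) ^ 2 * (X / (2 * M)) ^ 2 := by
        simp only [γ]
        field_simp
    _ ≤ K * (X / (2 * M)) ^ 2 := by gcongr

theorem exists_forall_mem_certifiedQuotDiffs {ι : Type*} [Fintype ι] (hι : 3 ≤ Fintype.card ι)
    {c : ι → 𝓞 k} (hc : ∀ i, c i ≠ 0) :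
    ∃ M : ℕ, ∀ ϱ : 𝓞 k, ϱ ≠ 0 → ∀ T : Finset (𝓞 k), (∀ n, ∃ x ∈ T, ϱ ∣ n - x) →
      ∃ K : ℕ, ∀ z, z ∈ certifiedQuotDiffs c M (RingOfIntegers.basis k) K ϱ T := by
  obtain ⟨δ, C, hδ, hC, hpop⟩ := exists_popular_value hι hc
  obtain ⟨M, hM⟩ := exists_nat_gt (2 * 9 ^ Module.finrank ℚ k * 2 ^ Module.finrank ℚ k / δ)
  have hM0 : 0 < M := by exact_mod_cast (lt_of_le_of_lt (by positivity) hM : (0 : ℝ) < M)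
  refine ⟨M, fun ϱ hϱ T hT ↦ ?_⟩
  obtain ⟨K, hcert⟩ := exists_forall_mem_certified hM0 hϱ hT hC.le
  refine ⟨K, fun z ↦ ?_⟩
  obtain ⟨X, hX, hXK, hXz⟩ : ∃ X : ℝ, 1 ≤ X ∧ M * K ≤ X ∧ M * house (z : k) ≤ X :=
    ⟨max 1 (max (M * K) (M * house (z : k))), by simp, by simp, by simp⟩
  obtain ⟨n, A, hA, hn, hcard, hrep⟩ := hpop X hX
  have hsmall (t : 𝓞 k) (ht : M * house (t : k) ≤ X) : t ∈ quotDiffs c M n :=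
    mem_quotDiffs_of_le_card hX hδ hM.le hA hcard hrep ht
  exact ⟨n, hcert hX hXK hn hsmall, hsmall z hXz⟩

end CertifiedIntegers

section PolynomialFunctions

variable {k σ τ ι : Type*} [CommRing k]

/-- The functions `k ^ σ → k` given by polynomials. They are used to write down the terms in
diophantine formulas without fixing a numbering of the variables. -/
def IsPolynomialFun (f : (σ → k) → k) : Prop :=
  ∃ p : MvPolynomial σ k, ∀ x, f x = MvPolynomial.eval x p

namespace IsPolynomialFun

variable {f g : (σ → k) → k}

theorem const (c : k) : IsPolynomialFun fun _ : σ → k ↦ c :=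
  ⟨MvPolynomial.C c, by simp⟩

theorem var (i : σ) : IsPolynomialFun fun x : σ → k ↦ x i :=
  ⟨MvPolynomial.X i, by simp⟩

theorem add (hf : IsPolynomialFun f) (hg : IsPolynomialFun g) :
    IsPolynomialFun fun x ↦ f x + g x :=
  let ⟨p, hp⟩ := hf
  let ⟨q, hq⟩ := hg
  ⟨p + q, by simp [hp, hq]⟩

theorem sub (hf : IsPolynomialFun f) (hg : IsPolynomialFun g) :
    IsPolynomialFun fun x ↦ f x - g x :=
  let ⟨p, hp⟩ := hf
  let ⟨q, hq⟩ := hg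
  ⟨p - q, by simp [hp, hq]⟩

theorem mul (hf : IsPolynomialFun f) (hg : IsPolynomialFun g) :
    IsPolynomialFun fun x ↦ f x * g x :=
  let ⟨p, hp⟩ := hf
  let ⟨q, hq⟩ := hg
  ⟨p * q, by simp [hp, hq]⟩

theorem pow (hf : IsPolynomialFun f) (n : ℕ) : IsPolynomialFun fun x ↦ f x ^ n :=
  let ⟨p, hp⟩ := hf
  ⟨p ^ n, by simp [hp]⟩

theorem sum {f : ι → (σ → k) → k} {s : Finset ι} (hf : ∀ i, IsPolynomialFun (f i)) :
    IsPolynomialFun fun x ↦ ∑ i ∈ s, f i x := by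
  choose p hp using hf
  exact ⟨∑ i ∈ s, p i, by simp [hp]⟩

theorem prod {f : ι → (σ → k) → k} {s : Finset ι} (hf : ∀ i, IsPolynomialFun (f i)) :
    IsPolynomialFun fun x ↦ ∏ i ∈ s, f i x := by
  choose p hp using hf
  exact ⟨∏ i ∈ s, p i, by simp [hp]⟩

theorem comp_inl (hf : IsPolynomialFun f) :
    IsPolynomialFun fun y : σ ⊕ τ → k ↦ f fun i ↦ y (Sum.inl i) :=
  let ⟨p, hp⟩ := hf
  ⟨MvPolynomial.rename Sum.inl p, fun y ↦ by rw [MvPolynomial.eval_rename]; exact hp _⟩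

end IsPolynomialFun

end PolynomialFunctions

section DiophantinePredicates

open MvPolynomial

variable {k σ τ ι : Type*} [Field k]

/-- The predicates on `k ^ σ` defined by an existentially quantified system of polynomial
equations. This is `IsDiophantine` with the variables and unknowns in a sum type, which avoids
arithmetic with indices when formulas are combined. -/
def IsDiophantinePred (P : (σ → k) → Prop) : Prop :=
  ∃ (m r : ℕ) (f : Fin r → MvPolynomial (σ ⊕ Fin m) k),
    ∀ a, P a ↔ ∃ b : Fin m → k, ∀ i, eval (Sum.elim a b) (f i) = 0

namespace IsDiophantinePred

theorem of_finite [Finite τ] [Finite ι] {P : (σ → k) → Prop} (f : ι → MvPolynomial (σ ⊕ τ) k)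
    (h : ∀ a, P a ↔ ∃ b : τ → k, ∀ i, eval (Sum.elim a b) (f i) = 0) : IsDiophantinePred P := by
  obtain ⟨m, ⟨e⟩⟩ := Finite.exists_equiv_fin τ
  obtain ⟨r, ⟨e'⟩⟩ := Finite.exists_equiv_fin ι
  refine ⟨m, r, fun i ↦ rename (Sum.map id e) (f (e'.symm i)), fun a ↦ ?_⟩
  have helim (b : Fin m → k) : Sum.elim a b ∘ Sum.map id e = Sum.elim a (b ∘ e) := by
    rw [Sum.elim_comp_map, Function.comp_id]
  simp only [h, eval_rename, helim]
  constructor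
  · rintro ⟨b, hb⟩
    exact ⟨b ∘ e.symm, fun i ↦ by simpa [Function.comp_assoc] using hb (e'.symm i)⟩
  · rintro ⟨b, hb⟩
    exact ⟨b ∘ e, fun i ↦ by simpa using hb (e' i)⟩

theorem eq {f g : (σ → k) → k} (hf : IsPolynomialFun f) (hg : IsPolynomialFun g) :
    IsDiophantinePred fun x ↦ f x = g x := by
  obtain ⟨p, hp⟩ := hf.sub hg
  refine of_finite (τ := Empty) (ι := Unit) (fun _ ↦ rename Sum.inl p) fun a ↦ ?_
  simp [eval_rename, ← hp, sub_eq_zero]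

theorem forall_finite [Finite ι] {P : ι → (σ → k) → Prop} (h : ∀ i, IsDiophantinePred (P i)) :
    IsDiophantinePred fun x ↦ ∀ i, P i x := by
  choose m r f hf using h
  refine of_finite (τ := Σ i, Fin (m i)) (ι := Σ i, Fin (r i))
    (fun j ↦ rename (Sum.map id (Sigma.mk j.1)) (f j.1 j.2)) fun a ↦ ?_
  simp only [hf, eval_rename, Sum.elim_comp_map, Function.comp_id, Sigma.forall]
  constructor
  · intro h
    choose b hb using h
    exact ⟨fun j ↦ b j.1 j.2, hb⟩
  · rintro ⟨b, hb⟩ i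
    exact ⟨fun j ↦ b ⟨i, j⟩, hb i⟩

theorem and {P Q : (σ → k) → Prop} (hP : IsDiophantinePred P) (hQ : IsDiophantinePred Q) :
    IsDiophantinePred fun x ↦ P x ∧ Q x := by
  have hPQ := forall_finite (P := fun b : Bool ↦ bif b then P else Q) (Bool.rec hQ hP)
  simpa [and_comm] using hPQ

theorem exists_fun [Finite τ] {P : (σ → k) → (τ → k) → Prop}
    (h : IsDiophantinePred fun y : σ ⊕ τ → k ↦ P (fun i ↦ y (Sum.inl i)) fun j ↦ y (Sum.inr j)) :
    IsDiophantinePred fun x ↦ ∃ b, P x b := by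
  obtain ⟨m, r, f, hf⟩ := h
  refine of_finite (τ := τ ⊕ Fin m) (fun i ↦ rename (Equiv.sumAssoc σ τ (Fin m)) (f i)) fun a ↦ ?_
  have helim (b : τ ⊕ Fin m → k) : Sum.elim a b ∘ Equiv.sumAssoc σ τ (Fin m) =
      Sum.elim (Sum.elim a (b ∘ Sum.inl)) (b ∘ Sum.inr) := by
    ext ((j | j) | j) <;> rfl
  simp only [eval_rename, helim]
  constructor
  · rintro ⟨b, hb⟩
    obtain ⟨c, hc⟩ := (hf (Sum.elim a b)).1 hb
    exact ⟨Sum.elim b c, hc⟩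
  · rintro ⟨b, hb⟩
    exact ⟨b ∘ Sum.inl, (hf (Sum.elim a (b ∘ Sum.inl))).2 ⟨_, hb⟩⟩

theorem exists_elem {P : (σ → k) → k → Prop}
    (h : IsDiophantinePred fun y : σ ⊕ Unit → k ↦ P (fun i ↦ y (Sum.inl i)) (y (Sum.inr ()))) :
    IsDiophantinePred fun x ↦ ∃ b, P x b := by
  have hfun := exists_fun (P := fun x (b : Unit → k) ↦ P x (b ())) h
  have hfun_iff (x : σ → k) : (∃ b : Unit → k, P x (b ())) ↔ ∃ b, P x b :=
    ⟨fun ⟨b, hb⟩ ↦ ⟨b (), hb⟩, fun ⟨b, hb⟩ ↦ ⟨fun _ ↦ b, hb⟩⟩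
  simpa only [hfun_iff] using hfun

theorem exists_mem_finset (S : Finset ι) (φ : ι → k) {P : (σ → k) → k → Prop}
    (h : IsDiophantinePred fun y : σ ⊕ Unit → k ↦ P (fun i ↦ y (Sum.inl i)) (y (Sum.inr ()))) :
    IsDiophantinePred fun x ↦ ∃ i ∈ S, P x (φ i) := by
  have hprod := exists_elem (P := fun x b ↦ ∏ i ∈ S, (b - φ i) = 0 ∧ P x b)
    ((eq (.prod fun i ↦ (IsPolynomialFun.var _).sub (.const (φ i))) (.const 0)).and h)
  simpa [Finset.prod_eq_zero_iff, sub_eq_zero, exists_and_left, and_assoc] using hprod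

theorem isDiophantine {n : ℕ} {P : (Fin n → k) → Prop} (h : IsDiophantinePred P) :
    IsDiophantine k {x | P x} := by
  obtain ⟨m, r, f, hf⟩ := h
  refine ⟨m, r, fun i ↦ rename finSumFinEquiv (f i), ?_⟩
  ext a
  have helim (b : Fin m → k) : Fin.append a b ∘ finSumFinEquiv = Sum.elim a b := by
    ext (j | j) <;> simp
  simp only [Set.mem_ofPred_eq, hf, eval_rename, helim]

end IsDiophantinePred

end DiophantinePredicates

section DiophantineFormulas

variable {k σ ι κ : Type*} [Field k] [Fintype ι] [Fintype κ]

/-- The elements of the form `s ^ (-m) * (1 + ρ * c) / (1 + ρ * d)` with `c`, `d` in `D`, written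
without division; the unknown `s'` makes `s` a unit. -/
def powerQuotients (m : ℕ) (ρ : k) (D : Set k) : Set k :=
  {t | ∃ s s' c d, s * s' = 1 ∧ c ∈ D ∧ d ∈ D ∧ t * (s ^ m * (1 + ρ * d)) = 1 + ρ * c}

namespace IsDiophantinePred

open IsPolynomialFun

variable {t n : (σ → k) → k}

theorem mem_firstCoords (ht : IsPolynomialFun t) (hn : IsPolynomialFun n) (c : ι → k) :
    IsDiophantinePred fun x ↦ t x ∈ firstCoords c (n x) :=
  exists_fun (eq hn.comp_inl
    ((ht.comp_inl.pow 2).add (.sum fun i ↦ (const (c i)).mul ((var (Sum.inr i)).pow 2))))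

theorem mem_quotDiffs (ht : IsPolynomialFun t) (hn : IsPolynomialFun n) (c : ι → k) (M : ℕ) :
    IsDiophantinePred fun x ↦ t x ∈ quotDiffs c M (n x) :=
  exists_mem_finset (Finset.Icc 1 M) (fun e ↦ (e : k))
    (P := fun x e ↦ ∃ a ∈ firstCoords c (n x), ∃ a' ∈ firstCoords c (n x), e * t x = a - a')
    (exists_elem ((mem_firstCoords (var _) hn.comp_inl.comp_inl c).and
      (exists_elem ((mem_firstCoords (var _) hn.comp_inl.comp_inl.comp_inl c).and
        (eq ((var _).mul ht.comp_inl.comp_inl.comp_inl) ((var _).sub (var _)))))))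

theorem mem_digitSums (ht : IsPolynomialFun t) (hn : IsPolynomialFun n) (c : ι → k) (M : ℕ)
    (ω : κ → k) (K : ℕ) : IsDiophantinePred fun x ↦ t x ∈ digitSums ω K (quotDiffs c M (n x)) :=
  have hn' := hn.comp_inl.comp_inl.comp_inl.comp_inl
  exists_fun (exists_fun (exists_fun (exists_fun
    ((forall_finite fun _ ↦ (mem_quotDiffs (var _) hn' c M).and
      ((mem_quotDiffs (var _) hn' c M).and
        ((mem_quotDiffs (var _) hn' c M).and (mem_quotDiffs (var _) hn' c M)))).and
      (eq ht.comp_inl.comp_inl.comp_inl.comp_inl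
        (.sum fun i ↦ (((const (K : k)).mul (((var _).mul (var _)).add (var _))).add (var _)).mul
          (const (ω i))))))))

theorem mem_certified (hn : IsPolynomialFun n) (c : ι → k) (M : ℕ) (ω : κ → k) (K : ℕ) (ϱ : k)
    (T : Finset k) : IsDiophantinePred fun x ↦ n x ∈ certified c M ω K ϱ T :=
  (mem_quotDiffs (const 1) hn c M).and
    (exists_mem_finset T id
      (P := fun x a ↦ ∃ q ∈ digitSums ω K (quotDiffs c M (n x)), n x = a + ϱ * q)
      (exists_elem ((mem_digitSums (var _) hn.comp_inl.comp_inl c M ω K).and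
        (eq hn.comp_inl.comp_inl ((var _).add ((const ϱ).mul (var _)))))))

theorem mem_certifiedQuotDiffs (ht : IsPolynomialFun t) (c : ι → k) (M : ℕ) (ω : κ → k) (K : ℕ)
    (ϱ : k) (T : Finset k) : IsDiophantinePred fun x ↦ t x ∈ certifiedQuotDiffs c M ω K ϱ T :=
  exists_elem ((mem_certified (var _) c M ω K ϱ T).and (mem_quotDiffs ht.comp_inl (var _) c M))

theorem mem_powerQuotients (ht : IsPolynomialFun t) (m : ℕ) (ρ : k) (c : ι → k) (M : ℕ)
    (ω : κ → k) (K : ℕ) (ϱ : k) (T : Finset k) :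
    IsDiophantinePred fun x ↦ t x ∈ powerQuotients m ρ (certifiedQuotDiffs c M ω K ϱ T) :=
  exists_elem (exists_elem (exists_elem (exists_elem
    ((eq ((var _).mul (var _)) (const 1)).and
      ((mem_certifiedQuotDiffs (var _) c M ω K ϱ T).and
        ((mem_certifiedQuotDiffs (var _) c M ω K ϱ T).and
          (eq (ht.comp_inl.comp_inl.comp_inl.comp_inl.mul
            (((var _).pow m).mul ((const 1).add ((const ρ).mul (var _)))))
            ((const 1).add ((const ρ).mul (var _))))))))))

end IsDiophantinePred

end DiophantineFormulas

open scoped Nat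

section Valuation

variable {F Γ : Type*} [Field F] [LinearOrderedCommGroupWithZero Γ] {w : Valuation F Γ}

theorem valuation_natCast_le_one (w : Valuation F Γ) (n : ℕ) : w n ≤ 1 := by
  induction n with
  | zero => simp
  | succ n ih => simpa using Valuation.map_add_le _ ih w.map_one.le

section NormForm

variable {δ : F}

theorem valuation_sq_add_mul_sub_mul_sq (hδ : w δ ≤ 1)
    (hroot : ∀ x, w x ≤ 1 → w (x ^ 2 + x - δ) = 1) (x y : F) :
    w (x ^ 2 + x * y - δ * y ^ 2) = max (w x) (w y) ^ 2 := by
  rcases le_or_gt (w x) (w y) with h | h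
  · rw [max_eq_right h]
    rcases eq_or_ne y 0 with rfl | hy
    · have hx : x = 0 := by simpa using h
      simp [hx]
    have hxy : w (x / y) ≤ 1 := by
      rw [map_div₀]
      exact (div_le_one₀ (by simpa [zero_lt_iff] using hy)).2 h
    have hdiv : x ^ 2 + x * y - δ * y ^ 2 = ((x / y) ^ 2 + x / y - δ) * y ^ 2 := by field_simp
    rw [hdiv, map_mul, hroot _ hxy, map_pow, one_mul]
  · rw [max_eq_left h.le]
    have hmul : w (x * y) < w (x ^ 2) := by
      rw [sq, map_mul, map_mul]
      exact mul_lt_mul_of_pos_left h (zero_le.trans_lt h)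
    have hsq : w (δ * y ^ 2) < w (x ^ 2) := by
      rw [map_mul, map_pow, map_pow]
      calc w δ * w y ^ 2 ≤ w y ^ 2 := mul_le_of_le_one_left' hδ
        _ < w x ^ 2 := pow_lt_pow_left₀ h zero_le two_ne_zero
    have hadd : w (x ^ 2 + x * y) = w (x ^ 2) := Valuation.map_add_eq_of_lt_left _ hmul
    rw [Valuation.map_sub_eq_of_lt_left _ (by rwa [hadd]), hadd, map_pow]

theorem one_add_four_mul_ne_zero (hδ : w δ ≤ 1)
    (hroot : ∀ x, w x ≤ 1 → w (x ^ 2 + x - δ) = 1) : 1 + 4 * δ ≠ 0 := by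
  intro h
  have hmax := valuation_sq_add_mul_sub_mul_sq hδ hroot (-1) 2
  rw [show (-1) ^ 2 + -1 * 2 - δ * 2 ^ 2 = 0 by linear_combination -h, map_zero] at hmax
  have hle : (1 : Γ) ≤ max (w (-1)) (w 2) := by simp
  exact (pow_pos (zero_lt_one.trans_le hle) 2).ne hmax

theorem exists_valuation_sq_sub_mul_sq [CharZero F] (hδ : w δ ≤ 1)
    (hroot : ∀ x, w x ≤ 1 → w (x ^ 2 + x - δ) = 1) (a b : F) :
    ∃ s : F, w a ≤ w s ∧ w (a ^ 2 - (1 + 4 * δ) * b ^ 2) = w 4 * w s ^ 2 := by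
  set x := (a - b) / 2 with hx
  have hform : a ^ 2 - (1 + 4 * δ) * b ^ 2 = 4 * (x ^ 2 + x * b - δ * b ^ 2) := by
    rw [hx]
    ring
  have ha : w a ≤ max (w x) (w b) := by
    rw [show a = 2 * x + b by rw [hx]; ring]
    refine (Valuation.map_add _ _ _).trans (max_le_max ?_ le_rfl)
    rw [map_mul]
    exact mul_le_of_le_one_left' (by exact_mod_cast valuation_natCast_le_one w 2)
  rw [hform, map_mul, valuation_sq_add_mul_sub_mul_sq hδ hroot]
  rcases max_choice (w x) (w b) with h | h
  · exact ⟨x, h ▸ ha, by rw [h]⟩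
  · exact ⟨b, h ▸ ha, by rw [h]⟩

/-- The form `⟨1, -Δ, π, -πΔ⟩` with `Δ = 1 + 4δ` is the norm form of the quaternion algebra ramified
at `w`: the binary parts `⟨1, -Δ⟩` and `π⟨1, -Δ⟩` take values of valuations in distinct square
classes, so no cancellation between them is possible. -/
theorem valuation_le_of_mem_firstCoords [CharZero F] {π a n : F} (hδ : w δ ≤ 1)
    (hroot : ∀ x, w x ≤ 1 → w (x ^ 2 + x - δ) = 1)
    (hπ : ∀ x y : F, w x ^ 2 = w π * w y ^ 2 → x = 0)
    (ha : a ∈ firstCoords ![-(1 + 4 * δ), π, -(π * (1 + 4 * δ))] n) : w 4 * w a ^ 2 ≤ w n := by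
  obtain ⟨u, rfl⟩ := ha
  have hsum : a ^ 2 + ∑ i, ![-(1 + 4 * δ), π, -(π * (1 + 4 * δ))] i * u i ^ 2 =
      (a ^ 2 - (1 + 4 * δ) * u 0 ^ 2) + π * (u 1 ^ 2 - (1 + 4 * δ) * u 2 ^ 2) := by
    simp only [Fin.sum_univ_three, Matrix.cons_val]
    ring
  obtain ⟨s, has, hs⟩ := exists_valuation_sq_sub_mul_sq hδ hroot a (u 0)
  obtain ⟨s', -, hs'⟩ := exists_valuation_sq_sub_mul_sq hδ hroot (u 1) (u 2)
  have h4 : w 4 ≠ 0 := by simp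
  rw [hsum]
  calc w 4 * w a ^ 2 ≤ w 4 * w s ^ 2 := by gcongr
    _ ≤ _ := ?_
  by_cases heq : w (a ^ 2 - (1 + 4 * δ) * u 0 ^ 2) = w (π * (u 1 ^ 2 - (1 + 4 * δ) * u 2 ^ 2))
  · rw [map_mul, hs, hs', mul_left_comm] at heq
    simp [hπ s s' (mul_left_cancel₀ h4 heq)]
  · rw [Valuation.map_add_of_distinct_val _ heq, ← hs]
    exact le_max_left _ _

end NormForm

section CertificateValuation

variable {ι κ : Type*} [Fintype ι] [Fintype κ] {c : ι → F} {M : ℕ} {ω : κ → F} {K : ℕ}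

theorem valuation_le_of_mem_quotDiffs {C n t : F}
    (hc : ∀ a ∈ firstCoords c n, w C * w a ^ 2 ≤ w n) (ht : t ∈ quotDiffs c M n) :
    w (C * (M ! : F) ^ 2) * w t ^ 2 ≤ w n := by
  obtain ⟨e, he, a, ha, a', ha', heq⟩ := ht
  obtain ⟨he1, heM⟩ := Finset.mem_Icc.1 he
  obtain ⟨d, hd⟩ := Nat.dvd_factorial he1 heM
  have hM : w (M ! : F) ≤ w (e : F) := by
    rw [hd, Nat.cast_mul, map_mul]
    exact mul_le_of_le_one_right' (valuation_natCast_le_one w d)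
  calc w (C * (M ! : F) ^ 2) * w t ^ 2 = w C * (w (M ! : F) * w t) ^ 2 := by
        rw [map_mul, map_pow, mul_pow, mul_assoc]
    _ ≤ w C * (w (e : F) * w t) ^ 2 := by gcongr
    _ = w C * w (a - a') ^ 2 := by rw [← map_mul, heq]
    _ ≤ w C * max (w a) (w a') ^ 2 := by gcongr; exact Valuation.map_sub _ _ _
    _ ≤ w n := by rcases max_choice (w a) (w a') with h | h <;> simp only [h, hc _ ha, hc _ ha']

theorem valuation_le_of_mem_digitSums {κ₀ : F} {B : Γ} {D : Set F} {q : F}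
    (hω : ∀ i, w (ω i) ≤ 1) (h1 : 1 ∈ D) (hD : ∀ t ∈ D, w κ₀ * w t ^ 2 ≤ B)
    (hq : q ∈ digitSums ω K D) : w (κ₀ * q) ≤ B := by
  have hmul : ∀ t ∈ D, ∀ t' ∈ D, w (κ₀ * (t * t')) ≤ B := by
    intro t ht t' ht'
    have hmax : w κ₀ * max (w t) (w t') ^ 2 ≤ B := by
      rcases max_choice (w t) (w t') with h | h <;> simp only [h, hD t ht, hD t' ht']
    refine le_trans ?_ hmax
    rw [map_mul, map_mul, sq]
    gcongr
    exacts [le_max_left _ _, le_max_right _ _]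
  have hself : ∀ t ∈ D, w (κ₀ * t) ≤ B := fun t ht ↦ by simpa using hmul t ht 1 h1
  obtain ⟨r, r', s, t, h, rfl⟩ := hq
  rw [Finset.mul_sum]
  refine Valuation.map_sum_le _ fun i _ ↦ ?_
  obtain ⟨hr, hr', hs, ht⟩ := h i
  rw [show κ₀ * ((K * (r i * r' i + s i) + t i) * ω i) =
    (K * (κ₀ * (r i * r' i) + κ₀ * s i) + κ₀ * t i) * ω i by ring, map_mul]
  refine (mul_le_of_le_one_right' (hω i)).trans (Valuation.map_add_le _ ?_ (hself _ ht))
  rw [map_mul]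
  exact (mul_le_of_le_one_left' (valuation_natCast_le_one w K)).trans
    (Valuation.map_add_le _ (hmul _ hr _ hr') (hself _ hs))

variable {C ϱ : F} {T : Finset F}

theorem valuation_le_one_of_mem_certified {n : F} (hc : ∀ a ∈ firstCoords c n, w C * w a ^ 2 ≤ w n)
    (hω : ∀ i, w (ω i) ≤ 1) (hϱ : w ϱ < w (C * (M ! : F) ^ 2)) (hT : ∀ x ∈ T, w x ≤ 1)
    (hn : n ∈ certified c M ω K ϱ T) : w n ≤ 1 := by
  obtain ⟨h1, x, hx, q, hq, hnq⟩ := hn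
  have hκq : w (C * (M ! : F) ^ 2 * q) ≤ w n :=
    valuation_le_of_mem_digitSums hω h1 (fun t ↦ valuation_le_of_mem_quotDiffs hc) hq
  by_contra! hlt
  have hϱq : w (ϱ * q) < w n := by
    rcases eq_or_ne q 0 with rfl | hq0
    · simpa using zero_lt_one.trans hlt
    rw [map_mul] at hκq ⊢
    exact (mul_lt_mul_of_pos_right hϱ (by simpa [zero_lt_iff] using hq0)).trans_le hκq
  refine (Valuation.map_add_lt _ ((hT x hx).trans_lt hlt) hϱq).ne ?_
  rw [← hnq]

theorem valuation_le_one_of_mem_certifiedQuotDiffs {z : F}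
    (hc : ∀ n, ∀ a ∈ firstCoords c n, w C * w a ^ 2 ≤ w n) (hC : w C ≤ 1)
    (hω : ∀ i, w (ω i) ≤ 1) (hϱ : w ϱ < w (C * (M ! : F) ^ 2)) (hT : ∀ x ∈ T, w x ≤ 1)
    (hz : z ∈ certifiedQuotDiffs c M ω K ϱ T) : w (C * (M ! : F) ^ 2 * z) ≤ 1 := by
  obtain ⟨n, hn, hz⟩ := hz
  set κ₀ := C * (M ! : F) ^ 2 with hκ₀_def
  have hκ₀ : w κ₀ ≤ 1 := by
    rw [hκ₀_def, map_mul, map_pow]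
    exact mul_le_one' hC (pow_le_one' (valuation_natCast_le_one w _) 2)
  refine (pow_le_one_iff two_ne_zero).1 ?_
  calc w (κ₀ * z) ^ 2 = w κ₀ * (w κ₀ * w z ^ 2) := by rw [map_mul, mul_pow, sq, mul_assoc]
    _ ≤ 1 * w n := by
        gcongr
        exact valuation_le_of_mem_quotDiffs (hc n) hz
    _ ≤ 1 := by simpa using valuation_le_one_of_mem_certified (hc n) hω hϱ hT hn

end CertificateValuation

end Valuation

open Topology WithZero
open scoped nonZeroDivisors

section LocalPowers

theorem exists_pow_isPrincipal {R : Type*} [CommRing R] [IsDedekindDomain R] [Finite (ClassGroup R)]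
    (I : Ideal R) : ∃ h, 0 < h ∧ (I ^ h).IsPrincipal := by
  rcases eq_or_ne I ⊥ with rfl | hI
  · exact ⟨1, one_pos, by simpa using bot_isPrincipal⟩
  have hI' : I ∈ (Ideal R)⁰ := mem_nonZeroDivisors_of_ne_zero hI
  refine ⟨Nat.card (ClassGroup R), Nat.card_pos, ?_⟩
  have hmk : ClassGroup.mk0 (⟨I, hI'⟩ ^ Nat.card (ClassGroup R) : (Ideal R)⁰) = 1 := by
    rw [map_pow, pow_card_eq_one']
  exact (ClassGroup.mk0_eq_one_iff (pow_mem hI' _)).1 hmk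

variable {k : Type*} [Field k] [NumberField k] (v : HeightOneSpectrum (𝓞 k))

theorem mem_pow_asIdeal_iff_valuation_le {L : ℕ} (z : 𝓞 k) :
    z ∈ v.asIdeal ^ L ↔ v.valuation k (z : k) ≤ exp (-(L : ℤ)) := by
  rw [← v.intValuation_le_pow_iff_mem]
  exact (v.valuation_of_algebraMap (K := k) z).symm ▸ Iff.rfl

theorem exists_generator_pow_asIdeal_valuation_lt {γ : ℤᵐ⁰} (hγ : γ ≠ 0) :
    ∃ (L : ℕ) (ρ : 𝓞 k), v.asIdeal ^ L = Ideal.span {ρ} ∧ v.valuation k (ρ : k) < γ := by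
  obtain ⟨h, hh, ρ, hρ⟩ := exists_pow_isPrincipal v.asIdeal
  obtain ⟨N, hN⟩ := exists_exp_neg_natCast_lt hγ
  have hgen : v.asIdeal ^ (h * N) = Ideal.span {ρ ^ N} := by
    rw [pow_mul, hρ, Ideal.submodule_span_eq, Ideal.span_singleton_pow]
  have hmem : ρ ^ N ∈ v.asIdeal ^ (h * N) := hgen ▸ Ideal.mem_span_singleton_self _
  refine ⟨h * N, ρ ^ N, hgen, lt_of_le_of_lt ?_ hN⟩
  exact (mem_pow_asIdeal_iff_valuation_le v _).1
    (Ideal.pow_le_pow_right (Nat.le_mul_of_pos_left N hh) hmem)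

theorem exists_pow_eq_of_valuation_sub_one_lt {m : ℕ} (hm : 0 < m) :
    ∃ N : ℕ, ∀ u : v.adicCompletion k, Valued.v (u - 1) < exp (-(N : ℤ)) →
      ∃ y, y ≠ 0 ∧ y ^ m = u := by
  let : NontriviallyNormedField (v.adicCompletion k) := Valued.toNontriviallyNormedField _ ℤᵐ⁰
  have : CharZero (v.adicCompletion k) :=
    charZero_of_injective_algebraMap (algebraMap k _).injective
  have hderiv : (m : v.adicCompletion k) * 1 ^ (m - 1) ≠ 0 := by simp [hm.ne']
  have hmap := (hasStrictDerivAt_pow m (1 : v.adicCompletion k)).map_nhds_eq hderiv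
  have hpow : (fun x : v.adicCompletion k ↦ x ^ m) '' {x | x ≠ 0} ∈
      𝓝 (1 : v.adicCompletion k) := by
    rw [one_pow] at hmap
    exact hmap ▸ Filter.image_mem_map (isOpen_ne.mem_nhds one_ne_zero)
  obtain ⟨γ, hγ⟩ := Valued.mem_nhds.1 hpow
  obtain ⟨N, hN⟩ := exists_exp_neg_natCast_lt
    (x := MonoidWithZeroHom.ValueGroup₀.embedding γ.1) (by simp)
  refine ⟨N, fun u hu ↦ hγ (show Valued.v.restrict (u - 1) < γ.1 from ?_)⟩
  rw [Valuation.restrict_lt_iff_lt_embedding]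
  exact hu.trans hN

theorem exists_valuation_mul_pow_sub_one_lt {m : ℕ} {t : k} {a : v.adicCompletion k} (ha : a ≠ 0)
    (h : a ^ m = algebraMap k (v.adicCompletion k) t) (N : ℕ) :
    ∃ s : k, s ≠ 0 ∧ v.valuation k (t * s ^ m - 1) < exp (-(N : ℤ)) := by
  obtain ⟨c, hc⟩ := HeightOneSpectrum.valuedAdicCompletion_surjective k v (exp (-(N : ℤ)))
  have hopen : IsOpen {x : v.adicCompletion k | x ≠ 0 ∧
      Valued.v.restrict (algebraMap k (v.adicCompletion k) t * x ^ m - 1) <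
        Valued.v.restrict c} :=
    isOpen_ne.inter ((Valued.isOpen_ball _ (Valued.v.restrict c)).preimage (by fun_prop))
  obtain ⟨s, hs0, hs⟩ := (HeightOneSpectrum.denseRange_algebraMap k v).exists_mem_open hopen
    ⟨a⁻¹, inv_ne_zero ha, by
      rw [← h, ← mul_pow, mul_inv_cancel₀ ha, Valuation.restrict_lt_iff, hc]
      simp⟩
  refine ⟨s, by simpa using hs0, ?_⟩
  rw [← HeightOneSpectrum.valuedAdicCompletion_eq_valuation', ← hc, ← Valuation.restrict_lt_iff]
  rwa [← map_pow, ← map_mul, ← map_one (algebraMap k (v.adicCompletion k)), ← map_sub] at hs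

/-- Write `r = n / d` with `d` a unit at `v`, and multiply both by an inverse of `d` modulo
`v ^ L`. -/
theorem exists_sub_one_mem_pow_mul_eq {L : ℕ} {r : k}
    (hr : v.valuation k (r - 1) < exp (-(L : ℤ))) :
    ∃ x y : 𝓞 k, x - 1 ∈ v.asIdeal ^ L ∧ y - 1 ∈ v.asIdeal ^ L ∧ r * x = y := by
  have hr1 : v.valuation k r ≤ 1 := by
    rw [← sub_add_cancel r 1]
    refine Valuation.map_add_le _ (hr.le.trans ?_) (map_one _).le
    rw [← exp_zero, exp_le_exp]
    omega
  obtain ⟨n, ⟨d, hd⟩, hnd : r * (d : k) = n⟩ := v.exists_primeCompl_mul_eq_of_integer r hr1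
  rw [← v.intValuation_eq_one_iff_mem_primeCompl] at hd
  obtain ⟨y, hy⟩ := v.exists_intValuation_mul_sub_lt (a := d) (b := 1) (by simp [hd])
    (Multiplicative.ofAdd (-(L : ℤ)))
  rw [Valuation.map_sub_swap] at hy
  have hyd : y * d - 1 ∈ v.asIdeal ^ L := (v.intValuation_le_pow_iff_mem _ _).1 hy.le
  refine ⟨y * d, y * n, hyd, ?_, ?_⟩
  · rw [mem_pow_asIdeal_iff_valuation_le] at hyd ⊢
    have hsub : ((y * n - 1 : 𝓞 k) : k) =
        (r - 1) * ((y * d : 𝓞 k) : k) + ((y * d - 1 : 𝓞 k) : k) := by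
      simp only [map_sub, map_mul, map_one, ← hnd]
      ring
    rw [hsub]
    refine Valuation.map_add_le _ ?_ hyd
    rw [map_mul]
    exact (mul_le_of_le_one_right' (v.valuation_le_one _)).trans hr.le
  · simp only [map_mul, ← hnd]
    ring

theorem exists_pow_eq_of_mem_powerQuotients {m N : ℕ} {κ ρ t : k} {D : Set k}
    (hN : ∀ u : v.adicCompletion k, Valued.v (u - 1) < exp (-(N : ℤ)) → ∃ y, y ≠ 0 ∧ y ^ m = u)
    (hD : ∀ z ∈ D, v.valuation k (κ * z) ≤ 1)
    (hρ : v.valuation k ρ < exp (-(N : ℤ)) * v.valuation k κ) (ht : t ∈ powerQuotients m ρ D) :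
    ∃ a : v.adicCompletion k, a ≠ 0 ∧ a ^ m = algebraMap k (v.adicCompletion k) t := by
  obtain ⟨s, s', c, d, hs, hc, hd, heq⟩ := ht
  have hroot : ∀ z ∈ D, ∃ y : v.adicCompletion k, y ≠ 0 ∧
      y ^ m = algebraMap k (v.adicCompletion k) (1 + ρ * z) := by
    intro z hz
    refine hN _ ?_
    have hsub : algebraMap k (v.adicCompletion k) (1 + ρ * z) - 1 =
        ((ρ * z : k) : v.adicCompletion k) := by
      rw [map_add, map_one, add_sub_cancel_left]
      rfl
    rw [hsub, HeightOneSpectrum.valuedAdicCompletion_eq_valuation']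
    refine lt_of_mul_lt_mul_right (a := v.valuation k κ) ?_ zero_le
    calc v.valuation k (ρ * z) * v.valuation k κ = v.valuation k ρ * v.valuation k (κ * z) := by
          rw [← map_mul, ← map_mul]
          ring_nf
      _ ≤ v.valuation k ρ := mul_le_of_le_one_right' (hD z hz)
      _ < _ := hρ
  obtain ⟨y, hy, hyc⟩ := hroot c hc
  obtain ⟨y', hy', hyd⟩ := hroot d hd
  have hs0 : algebraMap k (v.adicCompletion k) s ≠ 0 := by simpa using left_ne_zero_of_mul_eq_one hs
  refine ⟨y / (algebraMap k _ s * y'), div_ne_zero hy (mul_ne_zero hs0 hy'), ?_⟩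
  rw [div_pow, div_eq_iff (pow_ne_zero _ (mul_ne_zero hs0 hy')), mul_pow, hyc, hyd, ← heq]
  simp

theorem mem_powerQuotients_of_pow_eq {m L : ℕ} {t : k} {ρ : 𝓞 k} {D : Set k}
    (hρ : v.asIdeal ^ L = Ideal.span {ρ}) (hD : ∀ z : 𝓞 k, (z : k) ∈ D)
    {a : v.adicCompletion k} (ha : a ≠ 0) (h : a ^ m = algebraMap k (v.adicCompletion k) t) :
    t ∈ powerQuotients m (ρ : k) D := by
  obtain ⟨s, hs, hst⟩ := exists_valuation_mul_pow_sub_one_lt v ha h L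
  obtain ⟨x, y, hx, hy, hxy⟩ := exists_sub_one_mem_pow_mul_eq v hst
  rw [hρ, Ideal.mem_span_singleton'] at hx hy
  obtain ⟨d, hd⟩ := hx
  obtain ⟨c, hc⟩ := hy
  have hx : x = 1 + ρ * d := by linear_combination -hd
  have hy : y = 1 + ρ * c := by linear_combination -hc
  refine ⟨s, s⁻¹, c, d, mul_inv_cancel₀ hs, hD c, hD d, ?_⟩
  simpa only [hx, hy, map_add, map_mul, map_one, mul_assoc] using hxy

end LocalPowers

section IntegralityAtPlace

variable {k : Type*} [Field k] [NumberField k] (v : HeightOneSpectrum (𝓞 k))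

/-- The map `x ↦ x ^ 2 + x` identifies `0` and `-1`, so it is not surjective on the residue field,
and `X ^ 2 + X - δ` has no residual root for a suitable `δ`. -/
theorem exists_valuation_sq_add_sub_eq_one :
    ∃ δ : 𝓞 k, ∀ x : k, v.valuation k x ≤ 1 → v.valuation k (x ^ 2 + x - (δ : k)) = 1 := by
  have : Finite (𝓞 k ⧸ v.asIdeal) := Ideal.finiteQuotientOfFreeOfNeBot _ v.ne_bot
  have : Nontrivial (𝓞 k ⧸ v.asIdeal) := Ideal.Quotient.nontrivial_iff.2 v.isPrime.ne_top
  have hsurj : ¬ Function.Surjective fun x : 𝓞 k ⧸ v.asIdeal ↦ x ^ 2 + x := fun h ↦ by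
    have hzero : (0 : 𝓞 k ⧸ v.asIdeal) = -1 := Finite.injective_iff_surjective.2 h (by simp)
    exact one_ne_zero (neg_eq_zero.1 hzero.symm)
  obtain ⟨d, hd⟩ := not_forall.1 hsurj
  obtain ⟨δ, rfl⟩ := Ideal.Quotient.mk_surjective d
  refine ⟨δ, fun x hx ↦ ?_⟩
  obtain ⟨a, ha⟩ := v.exists_valuation_sub_lt_of_integer hx 1
  rw [Units.val_one] at ha
  have hval : v.valuation k ((a : k) ^ 2 + a - δ) = 1 := by
    have hmem : a ^ 2 + a - δ ∉ v.asIdeal := fun h ↦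
      hd ⟨Ideal.Quotient.mk _ a, by simpa using Ideal.Quotient.eq.2 h⟩
    simpa using (v.valuation_eq_one_iff_notMem (K := k)).2 hmem
  have hlt : v.valuation k ((x - a) * (x + a + 1)) < 1 := by
    rw [map_mul, Valuation.map_sub_swap]
    exact mul_lt_one_of_lt_of_le ha (Valuation.map_add_le _
      (Valuation.map_add_le _ hx (v.valuation_le_one a)) (map_one _).le)
  rw [show x ^ 2 + x - (δ : k) = ((a : k) ^ 2 + a - δ) + (x - a) * (x + a + 1) by ring,
    Valuation.map_add_eq_of_lt_left _ (by rwa [hval]), hval]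

theorem eq_zero_of_sq_eq_exp_neg_one_mul_sq {a b : ℤᵐ⁰} (h : a ^ 2 = exp (-1) * b ^ 2) :
    a = 0 := by
  by_contra ha
  have hb : b ≠ 0 := by
    rintro rfl
    simp [ha] at h
  have hlog := congrArg log h
  rw [log_mul (by simp) (by simp [hb]), log_pow, log_pow, log_exp, two_nsmul, two_nsmul] at hlog
  omega

theorem exists_finset_forall_dvd_sub {ϱ : 𝓞 k} (hϱ : ϱ ≠ 0) :
    ∃ T : Finset (𝓞 k), ∀ n, ∃ x ∈ T, ϱ ∣ n - x := by
  classical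
  have : Finite (𝓞 k ⧸ Ideal.span {ϱ}) :=
    Ideal.finiteQuotientOfFreeOfNeBot _ (by simpa using hϱ)
  have := Fintype.ofFinite (𝓞 k ⧸ Ideal.span {ϱ})
  refine ⟨Finset.univ.image fun x : 𝓞 k ⧸ Ideal.span {ϱ} ↦ Quotient.out x, fun n ↦
    ⟨_, Finset.mem_image_of_mem _ (Finset.mem_univ (Ideal.Quotient.mk _ n)), ?_⟩⟩
  rw [← Ideal.mem_span_singleton, ← Ideal.Quotient.eq]
  exact (Quotient.out_eq _).symm

theorem exists_diagonalForm_valuation_le :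
    ∃ c : Fin 3 → 𝓞 k, (∀ i, c i ≠ 0) ∧ ∀ n : k, ∀ a ∈ firstCoords (algebraMap (𝓞 k) k ∘ c) n,
      v.valuation k 4 * v.valuation k a ^ 2 ≤ v.valuation k n := by
  obtain ⟨δ, hδ⟩ := exists_valuation_sq_add_sub_eq_one v
  obtain ⟨π, hπ⟩ := v.intValuation_exists_uniformizer
  have hπv : v.valuation k (π : k) = exp (-1 : ℤ) := (v.valuation_of_algebraMap π).trans hπ
  have hπ0 : π ≠ 0 := by
    rintro rfl
    exact exp_ne_zero (hπ.symm.trans (map_zero _))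
  have hΔ : algebraMap (𝓞 k) k (1 + 4 * δ) = 1 + 4 * (δ : k) := by
    rw [map_add, map_mul, map_one, map_ofNat]
  have hΔ0 : 1 + 4 * δ ≠ 0 := by
    intro h
    rw [h, map_zero] at hΔ
    exact one_add_four_mul_ne_zero (v.valuation_le_one δ) hδ hΔ.symm
  have hcoe : algebraMap (𝓞 k) k ∘ ![-(1 + 4 * δ), π, -(π * (1 + 4 * δ))] =
      ![-(1 + 4 * (δ : k)), (π : k), -((π : k) * (1 + 4 * (δ : k)))] := by
    ext i
    fin_cases i <;> simp [← hΔ]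
  refine ⟨![-(1 + 4 * δ), π, -(π * (1 + 4 * δ))], ?_, fun n a ha ↦ ?_⟩
  · intro i
    fin_cases i
    exacts [neg_ne_zero.2 hΔ0, hπ0, neg_ne_zero.2 (mul_ne_zero hπ0 hΔ0)]
  · refine valuation_le_of_mem_firstCoords (v.valuation_le_one δ) hδ (fun x y h ↦ ?_) (hcoe ▸ ha)
    rw [hπv] at h
    exact (map_eq_zero _).1 (eq_zero_of_sq_eq_exp_neg_one_mul_sq h)

theorem exists_certifiedQuotDiffs_valuation_le_one :
    ∃ (c : Fin 3 → k) (M K : ℕ) (ω : Module.Free.ChooseBasisIndex ℤ (𝓞 k) → k) (ϱ : k)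
      (T : Finset k) (κ : k), κ ≠ 0 ∧ (∀ z : 𝓞 k, (z : k) ∈ certifiedQuotDiffs c M ω K ϱ T) ∧
        ∀ z ∈ certifiedQuotDiffs c M ω K ϱ T, v.valuation k (κ * z) ≤ 1 := by
  classical
  obtain ⟨c, hc0, hc⟩ := exists_diagonalForm_valuation_le v
  obtain ⟨M, hM⟩ := exists_forall_mem_certifiedQuotDiffs (by simp) hc0
  obtain ⟨π, hπv, hπ0⟩ := Submodule.exists_mem_ne_zero_of_ne_bot v.ne_bot
  obtain ⟨ϱ, hϱ⟩ : ∃ ϱ : 𝓞 k,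
      algebraMap (𝓞 k) k ϱ = algebraMap (𝓞 k) k π * (4 * (M ! : k) ^ 2) :=
    ⟨π * (4 * (M ! : 𝓞 k) ^ 2), by rw [map_mul, map_mul, map_ofNat, map_pow, map_natCast]⟩
  have hκ0 : 4 * (M ! : k) ^ 2 ≠ 0 := by simp [Nat.factorial_ne_zero]
  have hϱ0 : ϱ ≠ 0 := by
    rw [← RingOfIntegers.coe_ne_zero_iff, hϱ]
    exact mul_ne_zero (RingOfIntegers.coe_ne_zero_iff.2 hπ0) hκ0
  have hϱκ : v.valuation k (algebraMap (𝓞 k) k ϱ) < v.valuation k (4 * (M ! : k) ^ 2) := by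
    rw [hϱ, map_mul]
    exact mul_lt_of_lt_one_left (by simpa [zero_lt_iff] using hκ0)
      ((v.valuation_lt_one_iff_mem π).2 hπv)
  obtain ⟨T, hT⟩ := exists_finset_forall_dvd_sub hϱ0
  obtain ⟨K, hK⟩ := hM ϱ hϱ0 T hT
  refine ⟨_, M, K, _, ϱ, T.image (algebraMap (𝓞 k) k), _, hκ0,
    fun z ↦ map_mem_certifiedQuotDiffs (algebraMap (𝓞 k) k) (hK z), fun z hz ↦
      valuation_le_one_of_mem_certifiedQuotDiffs hc
        (by exact_mod_cast valuation_natCast_le_one (v.valuation k) 4)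
        (fun i ↦ v.valuation_le_one _) hϱκ ?_ hz⟩
  simp only [Finset.forall_mem_image]
  exact fun x _ ↦ v.valuation_le_one x

end IntegralityAtPlace

/-- For a number field `k`, a nonarchimedean place `v`, and `m ∈ ℤ_{>0}`, the set
`k_v^{×m} ∩ k` of nonzero elements of `k` that are `m`-th powers in `k_v` is
diophantine over `k`. -/
theorem mth_powers_in_completion_isDiophantine (k : Type*) [Field k] [NumberField k]
    (v : HeightOneSpectrum (NumberField.RingOfIntegers k)) (m : ℕ) (hm : 0 < m) :
    IsDiophantineSet k
      {t : k | ∃ a : v.adicCompletion k, a ≠ 0 ∧ a ^ m = algebraMap k (v.adicCompletion k) t} := by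
  obtain ⟨c, M, K, ω, ϱ, T, κ, hκ, hintegers, hval⟩ := exists_certifiedQuotDiffs_valuation_le_one v
  obtain ⟨N, hN⟩ := exists_pow_eq_of_valuation_sub_one_lt v hm
  obtain ⟨L, ρ, hρ, hρ_lt⟩ := exists_generator_pow_asIdeal_valuation_lt v
    (mul_ne_zero (exp_ne_zero (a := -(N : ℤ))) ((map_ne_zero (v.valuation k)).2 hκ))
  have hiff (t : k) : (∃ a : v.adicCompletion k, a ≠ 0 ∧ a ^ m = algebraMap k _ t) ↔
      t ∈ powerQuotients m (ρ : k) (certifiedQuotDiffs c M ω K ϱ T) :=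
    ⟨fun ⟨_, ha, h⟩ ↦ mem_powerQuotients_of_pow_eq v hρ hintegers ha h,
      exists_pow_eq_of_mem_powerQuotients v hN hval hρ_lt⟩
  simp only [hiff]
  exact (IsDiophantinePred.mem_powerQuotients (.var (0 : Fin 1)) m (ρ : k) c M ω K
    ϱ T).isDiophantine
end

section
/- Let k be a number field, let k_v be the completion of k at a nonarchimedean place v, and let m ∈ ℤ_{>0}. Then the subgroup k_v^{×m} of m-th powers has finite index in the multiplicative group k_v^×; equivalently, the quotient group k_v^×/k_v^{×m} is finite. -/
open IsDedekindDomain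

/-!
If `m ≠ 0` in a locally compact normed field `L`, the inverse function theorem makes the `m`-th
powers an open subgroup of `Lˣ`, and rescaling by powers of `c ^ m` for some `‖c‖ > 1` moves every
unit into a fixed compact shell `r ≤ ‖x‖ ≤ 1`. So the quotient is discrete and compact, hence
finite. The completion of `K = Frac R` at `v` is locally compact because its ring of integers is a
complete discrete valuation ring whose residue field is, by density of `K`, a quotient of the finite
ring `R ⧸ v`.
-/

theorem finiteIndex_of_isOpen_of_isCompact {G : Type*} [Group G] [TopologicalSpace G]
    [ContinuousMul G] {H : Subgroup G} (hH : IsOpen (H : Set G)) {C : Set G} (hC : IsCompact C)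
    (hcover : ∀ g, ∃ h ∈ H, g * h ∈ C) : H.FiniteIndex := by
  have : DiscreteTopology (G ⧸ H) := QuotientGroup.discreteTopology hH
  have himage : (QuotientGroup.mk : G → G ⧸ H) '' C = Set.univ := by
    refine Set.eq_univ_of_forall fun q => ?_
    obtain ⟨g, rfl⟩ := QuotientGroup.mk_surjective q
    obtain ⟨h, hh, hgh⟩ := hcover g
    exact ⟨g * h, hgh, QuotientGroup.mk_mul_of_mem g hh⟩
  have : CompactSpace (G ⧸ H) := ⟨himage ▸ hC.image QuotientGroup.continuous_mk⟩
  have : Finite (G ⧸ H) := finite_of_compact_of_discrete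
  exact Subgroup.finiteIndex_of_finite_quotient

section NormedField

variable {K : Type*} [NontriviallyNormedField K]

theorem range_pow_mem_nhds_one [CompleteSpace K] {m : ℕ} (hm : (m : K) ≠ 0) :
    Set.range (fun x : K => x ^ m) ∈ nhds 1 := by
  have hmap := (hasStrictDerivAt_pow m (1 : K)).map_nhds_eq (by simpa using hm)
  rw [one_pow] at hmap
  exact hmap ▸ Filter.range_mem_map

theorem isOpen_range_powMonoidHom_units [CompleteSpace K] {m : ℕ} (hm : (m : K) ≠ 0) :
    IsOpen ((powMonoidHom m : Kˣ →* Kˣ).range : Set Kˣ) := by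
  have hm0 : m ≠ 0 := by rintro rfl; simp at hm
  refine Subgroup.isOpen_of_mem_nhds _ (g := 1) ?_
  filter_upwards [Units.continuous_val.continuousAt (x := (1 : Kˣ)) (range_pow_mem_nhds_one hm)]
    with u ⟨x, hx⟩
  have hx0 : x ≠ 0 := (pow_ne_zero_iff hm0).1 (hx.trans_ne u.ne_zero)
  exact ⟨Units.mk0 x hx0, Units.ext hx⟩

theorem isCompact_setOf_norm_units_mem_Icc [ProperSpace K] {r : ℝ} (hr : 0 < r) (s : ℝ) :
    IsCompact {u : Kˣ | ‖(u : K)‖ ∈ Set.Icc r s} := by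
  have hshell : IsCompact {x : K | ‖x‖ ∈ Set.Icc r s} :=
    (isCompact_closedBall (0 : K) s).of_isClosed_subset (isClosed_Icc.preimage continuous_norm)
      fun x hx => by simpa using hx.2
  refine (Units.isOpenEmbedding_val.isInducing.isCompact_preimage_iff fun x hx => ?_).2 hshell
  exact ⟨Units.mk0 x (norm_pos_iff.1 (hr.trans_le hx.1)), rfl⟩

theorem exists_norm_mul_pow_mem_Icc (K : Type*) [NontriviallyNormedField K] {m : ℕ} (hm : m ≠ 0) :
    ∃ r : ℝ, 0 < r ∧ ∀ u : Kˣ, ∃ w : Kˣ, ‖((u * w ^ m : Kˣ) : K)‖ ∈ Set.Icc r 1 := by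
  obtain ⟨c, hc⟩ := NormedField.exists_one_lt_norm K
  have hcm : 1 < ‖c ^ m‖ := by simpa only [norm_pow] using one_lt_pow₀ hc hm
  refine ⟨1 / ‖c ^ m‖, by positivity, fun u => ?_⟩
  obtain ⟨n, -, hlt, hle, -⟩ := rescale_to_shell_zpow hcm one_pos u.ne_zero
  let d : Kˣ := Units.mk0 c (norm_pos_iff.1 (one_pos.trans hc))
  have hval : ((u * (d ^ n) ^ m : Kˣ) : K) = (c ^ m) ^ n • (u : K) := by
    simp only [d, Units.val_mul, Units.val_zpow_eq_zpow_val, Units.val_mk0, smul_eq_mul,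
      mul_comm, ← zpow_natCast, ← zpow_mul]
  exact ⟨d ^ n, hval ▸ ⟨hle, hlt.le⟩⟩

theorem finiteIndex_range_powMonoidHom_units [ProperSpace K] {m : ℕ} (hm : (m : K) ≠ 0) :
    (powMonoidHom m : Kˣ →* Kˣ).range.FiniteIndex := by
  have hm0 : m ≠ 0 := by rintro rfl; simp at hm
  obtain ⟨r, hr, hshell⟩ := exists_norm_mul_pow_mem_Icc K hm0
  refine finiteIndex_of_isOpen_of_isCompact (isOpen_range_powMonoidHom_units hm)
    (isCompact_setOf_norm_units_mem_Icc hr 1) fun u => ?_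
  obtain ⟨w, hw⟩ := hshell u
  exact ⟨w ^ m, ⟨w, rfl⟩, hw⟩

end NormedField

section AdicCompletion

variable {R K : Type*} [CommRing R] [IsDedekindDomain R] [Field K] [Algebra R K]
  [IsFractionRing R K] (v : HeightOneSpectrum R)

theorem exists_valued_sub_algebraMap_lt_one {x : v.adicCompletion K} (hx : Valued.v x ≤ 1) :
    ∃ r : R, Valued.v (x - algebraMap R (v.adicCompletion K) r) < 1 := by
  have hopen : IsOpen {y : v.adicCompletion K | Valued.v (x - y) < 1} := by
    simpa [Valuation.restrict_lt_one_iff] using (Valued.isOpen_ball (v.adicCompletion K) 1).preimage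
      (continuous_const.sub continuous_id : Continuous fun y => x - y)
  obtain ⟨y, hy : Valued.v (x - algebraMap K _ y) < 1⟩ :=
    (v.denseRange_algebraMap K).exists_mem_open hopen ⟨x, by simp⟩
  have hval (z : K) : Valued.v (algebraMap K (v.adicCompletion K) z) = v.valuation K z :=
    v.valuedAdicCompletion_eq_valuation' z
  have hy_int : v.valuation K y ≤ 1 := by
    rw [← hval, ← sub_sub_cancel x (algebraMap K _ y)]
    exact Valued.v.map_sub_le hx hy.le
  obtain ⟨r, hr⟩ := v.exists_valuation_sub_lt_of_integer hy_int 1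
  rw [Valuation.map_sub_swap, ← hval, map_sub, Units.val_one,
    ← IsScalarTower.algebraMap_apply] at hr
  refine ⟨r, ?_⟩
  rw [← sub_add_sub_cancel x (algebraMap K _ y)]
  exact Valued.v.map_add_lt hy hr

theorem residue_adicCompletionIntegers_eq_zero_iff {x : v.adicCompletionIntegers K} :
    IsLocalRing.residue (v.adicCompletionIntegers K) x = 0 ↔
      Valued.v (x : v.adicCompletion K) < 1 := by
  rw [IsLocalRing.residue_eq_zero_iff]
  exact Valuation.mem_maximalIdeal_iff _ _

theorem algebraMap_residueField_adicCompletionIntegers_surjective :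
    Function.Surjective
      (algebraMap R (IsLocalRing.ResidueField (v.adicCompletionIntegers K))) := by
  intro q
  obtain ⟨x, rfl⟩ := IsLocalRing.residue_surjective q
  obtain ⟨r, hr⟩ := exists_valued_sub_algebraMap_lt_one v x.2
  refine ⟨r, (sub_eq_zero.1 ?_).symm⟩
  exact (residue_adicCompletionIntegers_eq_zero_iff v
    (x := x - algebraMap R (v.adicCompletionIntegers K) r)).2 hr

theorem algebraMap_residueField_adicCompletionIntegers_eq_zero {a : R} (ha : a ∈ v.asIdeal) :
    algebraMap R (IsLocalRing.ResidueField (v.adicCompletionIntegers K)) a = 0 := by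
  refine (residue_adicCompletionIntegers_eq_zero_iff v
    (x := algebraMap R (v.adicCompletionIntegers K) a)).2 ?_
  exact (v.valuedAdicCompletion_eq_valuation a).trans_lt ((v.valuation_lt_one_iff_mem a).2 ha)

variable [Finite (R ⧸ v.asIdeal)]

theorem finite_residueField_adicCompletionIntegers :
    Finite (IsLocalRing.ResidueField (v.adicCompletionIntegers K)) :=
  Finite.of_surjective
    (Ideal.Quotient.lift v.asIdeal _ fun _ =>
      algebraMap_residueField_adicCompletionIntegers_eq_zero (K := K) v)
    (Ideal.Quotient.lift_surjective_of_surjective _ _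
      (algebraMap_residueField_adicCompletionIntegers_surjective v))

theorem compactSpace_adicCompletionIntegers : CompactSpace (v.adicCompletionIntegers K) := by
  let _ : (Valued.v : Valuation (v.adicCompletion K) (WithZero (Multiplicative ℤ))).RankOne :=
    Valuation.IsRankOneDiscrete.rankOne _ one_lt_two
  open Valued.integer in
  exact compactSpace_iff_completeSpace_and_isDiscreteValuationRing_and_finite_residueField.2
    ⟨(Valued.isClosed_integer (v.adicCompletion K)).completeSpace_coe,
      inferInstanceAs (IsDiscreteValuationRing (v.adicCompletionIntegers K)),
      finite_residueField_adicCompletionIntegers v⟩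

theorem pow_subgroup_finiteIndex_general {m : ℕ} (hm : (m : K) ≠ 0) :
    (powMonoidHom m : (v.adicCompletion K)ˣ →* (v.adicCompletion K)ˣ).range.FiniteIndex := by
  let _ : (Valued.v : Valuation (v.adicCompletion K) (WithZero (Multiplicative ℤ))).RankOne :=
    Valuation.IsRankOneDiscrete.rankOne _ one_lt_two
  let _ := Valued.toNontriviallyNormedField (v.adicCompletion K) (WithZero (Multiplicative ℤ))
  have : ProperSpace (v.adicCompletion K) :=
    Valued.integer.properSpace_iff_compactSpace_integer.2 (compactSpace_adicCompletionIntegers v)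
  refine finiteIndex_range_powMonoidHom_units ?_
  rw [← map_natCast (algebraMap K (v.adicCompletion K))]
  exact (map_ne_zero _).2 hm

end AdicCompletion

/-- For a number field `k`, a nonarchimedean place `v` with completion `k_v`, and `m ∈ ℤ_{>0}`,
the subgroup `k_v^{×m}` of `m`-th powers has finite index in `k_v^×`. -/
theorem pow_subgroup_finiteIndex (k : Type*) [Field k] [NumberField k]
    (v : HeightOneSpectrum (NumberField.RingOfIntegers k)) (m : ℕ) (hm : 0 < m) :
    ((powMonoidHom m : (v.adicCompletion k)ˣ →* (v.adicCompletion k)ˣ).range).FiniteIndex := by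
  have : Finite (NumberField.RingOfIntegers k ⧸ v.asIdeal) :=
    v.asIdeal.finiteQuotientOfFreeOfNeBot v.ne_bot
  exact pow_subgroup_finiteIndex_general v (Nat.cast_ne_zero.2 hm.ne')
end
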